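/- Let α = 1, ρ ∈ (0,1), and let X be a stable process with parameters (1, ρ) issued from the origin (x₀ = 0). Then almost surely U_{[t,1]} / log(1/t) → ∞ as t ↓ 0. -/

import Mathlib

/-!
The exponent `stableExponent 1 ρ` is even, while `ψ (-z)` must be the conjugate of `ψ z` for the
exponent `ψ` of a real variable. Hence the hypotheses force `ρ = 1 / 2`
(`IsStableProcess.rho_eq_half`) and the increments of `X` over a time `τ` have the Cauchy law of
scale `τ` (`IsStableProcess.map_increment`).

Split `(0, 1]` into the dyadic blocks `(s, 2s]`, `s = 2 ^ (-(n + 1))`. About `log (1 / t) / log 2` of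
them lie in `[t, 1]`, so it suffices that the average number of upcrossings per block tends to
infinity.

* **One block.** Subdivide the second half of a block into intervals of length `s / m`. For the path
  to be at distance about `y` below `0` at a grid point has conditional probability of order `y / s`,
  given the past of `s` and `|X s| ≤ L * s`; an increment larger than `3 * y` over the next interval
  has probability of order `s / (m * y)`. The product does not depend on `y`, so all the scales
  `y = 2 ^ i * ε * s ≤ s` contribute equally and, for small `ε`, the conditional mean number of grid
  intervals over which `X` moves from below `-ε * s` to above `ε * s` exceeds any given `K`. The
  second moment is bounded for fixed `ε`, which allows truncation at a level `M`
  (`IsStableProcess.exists_block_bound`). As the mesh tends to `0`, the right-continuity and left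
  limits of the path turn each such interval into an upcrossing (`eventually_card_le_encard`), and
  the reverse Fatou lemma preserves the mean (`IsStableProcess.exists_block`).

* **Averaging.** The truncated counts minus their conditional means given the past of the block are
  bounded and orthogonal, so a strong law of large numbers holds for them
  (`ae_eventually_sum_ge`).

* **Good blocks.** For a suitable `L` that does not depend on `K`, at least half of the blocks satisfy
  `|X s| ≤ L * s` (`IsStableProcess.exists_density`): the variables `√(|X s| / s)` satisfy a
  contracting recursion along the blocks, driven by independent identically distributed variables of
  finite mean.

Together, for every `K`, the first `N` blocks almost surely contain at least `(K / 2 - 1) * N`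
upcrossings when `N` is large.
-/

open MeasureTheory ProbabilityTheory Filter Real Set
open scoped ENNReal Topology

/-- The characteristic exponent of a stable process with parameters `(α, ρ)`:
`Ψ(z) = |z|^α exp(iπα(1/2 − ρ))` for `z ≥ 0` and
`Ψ(z) = |z|^α exp(−iπα(1/2 − ρ̂))` for `z < 0`, where `ρ̂ = 1 − ρ`. -/
noncomputable def stableExponent (α ρ : ℝ) (z : ℝ) : ℂ :=
  if 0 ≤ z then
    ((|z| ^ α : ℝ) : ℂ) * Complex.exp (Complex.I * Real.pi * α * (1 / 2 - ρ))
  else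
    ((|z| ^ α : ℝ) : ℂ) * Complex.exp (-(Complex.I * Real.pi * α * (1 / 2 - (1 - ρ))))

/-- A stable process with parameters `(α, ρ)` issued from `x₀ ∈ ℝ`, on the probability
space `(Ω, P)`: almost every path is càdlàg, `X 0 = x₀` a.s., and increments are
independent of the past, with characteristic function `exp(−(t−s)Ψ(z))`. -/
structure IsStableProcess (α ρ : ℝ) (x₀ : ℝ) {Ω : Type*} [MeasurableSpace Ω]
    (P : Measure Ω) (X : ℝ → Ω → ℝ) : Prop where
  measurable : ∀ t : ℝ, Measurable (X t)
  cadlag : ∀ᵐ ω ∂P,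
    (∀ t : ℝ, 0 ≤ t → ContinuousWithinAt (fun s => X s ω) (Set.Ici t) t) ∧
    (∀ t : ℝ, 0 < t → ∃ l : ℝ, Tendsto (fun s => X s ω) (𝓝[<] t) (𝓝 l))
  init : ∀ᵐ ω ∂P, X 0 ω = x₀
  indep : ∀ s t : ℝ, 0 ≤ s → s ≤ t →
    Indep (⨆ u ∈ Set.Icc (0 : ℝ) s, MeasurableSpace.comap (X u) inferInstance)
      (MeasurableSpace.comap (fun ω => X t ω - X s ω) inferInstance) P
  charFun : ∀ s t : ℝ, 0 ≤ s → s ≤ t → ∀ z : ℝ,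
    ∫ ω, Complex.exp (Complex.I * z * (X t ω - X s ω)) ∂P
      = Complex.exp (-(((t - s : ℝ) : ℂ) * stableExponent α ρ z))

/-- The number of upcrossings of the origin by the path `X · ω` during the time set `S`:
the cardinality (in `ℕ∞`) of `{s ∈ S : X_{s−}(ω) < 0 and X_s(ω) > 0}`. -/
noncomputable def upcrossings {Ω : Type*} (X : ℝ → Ω → ℝ) (S : Set ℝ) (ω : Ω) : ℕ∞ :=
  {s : ℝ | s ∈ S ∧ Function.leftLim (fun u => X u ω) s < 0 ∧ 0 < X s ω}.encard

open scoped NNReal FourierTransform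

/-! ### The Cauchy distribution -/

instance isProbabilityMeasure_cauchyMeasure (γ : ℝ≥0) :
    IsProbabilityMeasure (cauchyMeasure 0 γ) := by
  by_cases hγ : γ = 0
  · subst hγ
    rw [cauchyMeasure_zero_scale]
    infer_instance
  · constructor
    rw [cauchyMeasure_of_scale_ne_zero 0 hγ, withDensity_apply _ MeasurableSet.univ,
      Measure.restrict_univ, lintegral_cauchyPDF_eq_one 0 hγ]

lemma integrable_exp_neg_abs {c : ℝ} (hc : 0 < c) :
    Integrable (fun x : ℝ => Complex.exp (((-(c * |x|) : ℝ) : ℂ))) := by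
  have h1 : IntegrableOn (fun x : ℝ => Complex.exp (((-(c * |x|) : ℝ) : ℂ))) (Iic 0) := by
    refine (integrableOn_exp_mul_complex_Iic (a := (c : ℂ)) (by simpa using hc) 0).congr_fun
      (fun x hx => ?_) measurableSet_Iic
    simp only [mem_Iic] at hx
    simp [abs_of_nonpos hx]
  have h2 : IntegrableOn (fun x : ℝ => Complex.exp (((-(c * |x|) : ℝ) : ℂ))) (Ioi 0) := by
    refine (integrableOn_exp_mul_complex_Ioi (a := -(c : ℂ)) (by simpa using hc) 0).congr_fun
      (fun x hx => ?_) measurableSet_Ioi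
    simp only [mem_Ioi] at hx
    simp [abs_of_pos hx]
  have := h1.union h2
  rwa [Iic_union_Ioi, integrableOn_univ] at this

/-- The Laplace function `exp (-2πγ|x|)` has the Cauchy density as its Fourier transform. -/
lemma fourier_exp_neg_abs {γ : ℝ≥0} (hγ : γ ≠ 0) :
    𝓕 (fun x : ℝ => Complex.exp (((-(2 * π * γ * |x|) : ℝ) : ℂ)))
      = fun w : ℝ => ((cauchyPDFReal 0 γ w : ℝ) : ℂ) := by
  have hγ' : (0 : ℝ) < γ := by positivity
  have hc : 0 < 2 * π * γ := by positivity
  ext w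
  rw [Real.fourier_real_eq_integral_exp_smul]
  have hint : Integrable (fun v : ℝ => Complex.exp (↑(-2 * π * v * w) * Complex.I) •
      Complex.exp (((-(2 * π * γ * |v|) : ℝ) : ℂ))) := by
    refine (integrable_exp_neg_abs hc).mono (by fun_prop) (Eventually.of_forall fun v => ?_)
    rw [norm_smul, Complex.norm_exp_ofReal_mul_I, one_mul]
  rw [← integral_add_compl (s := Iic 0) measurableSet_Iic hint, compl_Iic]
  set a : ℂ := 2 * π * γ - 2 * π * w * Complex.I with ha
  set b : ℂ := -(2 * π * γ + 2 * π * w * Complex.I) with hb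
  have ha' : a.re = 2 * π * γ := by simp [ha]
  have hb' : b.re = -(2 * π * γ) := by simp [hb]
  have e1 : ∫ v in Iic (0:ℝ), Complex.exp (↑(-2 * π * v * w) * Complex.I) •
      Complex.exp (((-(2 * π * γ * |v|) : ℝ) : ℂ)) = 1 / a := by
    rw [setIntegral_congr_fun (g := fun v : ℝ => Complex.exp (a * v)) measurableSet_Iic,
      integral_exp_mul_complex_Iic (by rw [ha']; exact hc)]
    · simp
    · intro v hv
      simp only [mem_Iic] at hv
      simp only [abs_of_nonpos hv, smul_eq_mul, ← Complex.exp_add]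
      congr 1
      rw [ha]; push_cast; ring
  have e2 : ∫ v in Ioi (0:ℝ), Complex.exp (↑(-2 * π * v * w) * Complex.I) •
      Complex.exp (((-(2 * π * γ * |v|) : ℝ) : ℂ)) = - 1 / b := by
    rw [setIntegral_congr_fun (g := fun v : ℝ => Complex.exp (b * v)) measurableSet_Ioi,
      integral_exp_mul_complex_Ioi (by rw [hb']; linarith)]
    · simp
    · intro v hv
      simp only [mem_Ioi] at hv
      simp only [abs_of_pos hv, smul_eq_mul, ← Complex.exp_add]
      congr 1
      rw [hb]; push_cast; ring
  rw [e1, e2]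
  have ha0 : a ≠ 0 := fun h => by rw [h] at ha'; simp at ha'; exact hγ ha'
  have hb0 : b ≠ 0 := fun h => by rw [h] at hb'; simp at hb'; exact hγ hb'
  have hd : ((w : ℂ) ^ 2 + (γ : ℂ) ^ 2) ≠ 0 := by
    have : w ^ 2 + (γ:ℝ) ^ 2 ≠ 0 := by positivity
    exact_mod_cast this
  have hpi : (π : ℂ) ≠ 0 := by exact_mod_cast Real.pi_ne_zero
  have hab : a * b = - (4 * π ^ 2 * (w ^ 2 + (γ : ℂ) ^ 2)) := by
    rw [ha, hb]; ring_nf; simp; ring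
  have hs : b - a = -(4 * π * γ) := by rw [ha, hb]; ring
  have : 1 / a + -1 / b = (b - a) / (a * b) := by field_simp; ring
  rw [this, hab, hs, cauchyPDFReal_def]
  push_cast
  rw [sub_zero]
  field_simp

/-- Fourier inversion of `fourier_exp_neg_abs` gives the characteristic function of the centred
Cauchy law. -/
lemma charFun_cauchyMeasure {γ : ℝ≥0} (hγ : γ ≠ 0) (z : ℝ) :
    charFun (cauchyMeasure 0 γ) z = Complex.exp (((-(γ * |z|) : ℝ) : ℂ)) := by
  have hγ' : (0 : ℝ) < γ := by positivity
  have hc : 0 < 2 * π * γ := by positivity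
  have hF := fourier_exp_neg_abs hγ
  have hinv := Continuous.fourierInv_fourier_eq
    (f := fun x : ℝ => Complex.exp (((-(2 * π * γ * |x|) : ℝ) : ℂ))) (by fun_prop)
    (integrable_exp_neg_abs hc) (by rw [hF]; exact (integrable_cauchyPDFReal 0).ofReal)
  have h := congrFun hinv (z / (2 * π))
  rw [hF] at h
  rw [abs_div, abs_of_pos (by positivity : 0 < 2 * π)] at h
  have e : -(2 * π * γ * (|z| / (2 * π))) = -(γ * |z|) := by field_simp
  rw [e] at h
  rw [← h, Real.fourierInv_eq', charFun_apply_real, cauchyMeasure_of_scale_ne_zero 0 hγ,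
    integral_withDensity_eq_integral_toReal_smul (measurable_cauchyPDF 0 γ)
      (Eventually.of_forall fun x => by rw [cauchyPDF_def]; exact ENNReal.ofReal_lt_top)]
  congr 1
  ext v
  have hv : 0 ≤ cauchyPDFReal 0 γ v := by rw [cauchyPDFReal_def]; positivity
  rw [cauchyPDF_def, ENNReal.toReal_ofReal hv, Complex.real_smul, smul_eq_mul, mul_comm]
  congr 2
  have : ((2 * π * inner ℝ v (z / (2 * π)) : ℝ) : ℂ) = z * v := by
    have : 2 * π * inner ℝ v (z / (2 * π)) = z * v := by
      simp; field_simp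
    rw [this]; push_cast; rfl
  rw [this]

lemma cauchyMeasure_Ioo_ge {γ : ℝ≥0} (hγ : γ ≠ 0) {u v r : ℝ} (hu : -r ≤ u)
    (hv : v ≤ r) :
    γ / (π * (γ ^ 2 + r ^ 2)) * (v - u) ≤ (cauchyMeasure 0 γ).real (Ioo u v) := by
  have hγ' : (0 : ℝ) < γ := by positivity
  have hpos : 0 ≤ γ / (π * (γ ^ 2 + r ^ 2)) := by positivity
  rw [measureReal_def, ← ENNReal.ofReal_le_iff_le_toReal (measure_ne_top _ _),
    cauchyMeasure_of_scale_ne_zero 0 hγ, withDensity_apply _ measurableSet_Ioo,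
    ENNReal.ofReal_mul hpos, ← Real.volume_Ioo, ← setLIntegral_const]
  refine setLIntegral_mono (measurable_cauchyPDF 0 γ) fun x hx => ?_
  rw [cauchyPDF_def, cauchyPDFReal_def]
  refine ENNReal.ofReal_le_ofReal ?_
  have hx2 : x ^ 2 ≤ r ^ 2 := by nlinarith [hx.1, hx.2]
  have : π⁻¹ * γ * ((x - 0) ^ 2 + γ ^ 2)⁻¹ = γ / (π * (γ ^ 2 + x ^ 2)) := by
    field_simp; ring
  rw [this]
  gcongr

lemma cauchyMeasure_Ioi_ge {γ : ℝ≥0} (hγ : γ ≠ 0) {x : ℝ} (hx : (γ : ℝ) ≤ x) :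
    γ / (5 * π * x) ≤ (cauchyMeasure 0 γ).real (Ioi x) := by
  have hγ' : (0 : ℝ) < γ := by positivity
  have hx0 : 0 < x := hγ'.trans_le hx
  calc γ / (5 * π * x) = γ / (π * (x ^ 2 + (2 * x) ^ 2)) * (2 * x - x) := by field_simp; ring
    _ ≤ γ / (π * (γ ^ 2 + (2 * x) ^ 2)) * (2 * x - x) := by
        gcongr
        linarith
    _ ≤ (cauchyMeasure 0 γ).real (Ioo x (2 * x)) :=
        cauchyMeasure_Ioo_ge hγ (by linarith) le_rfl
    _ ≤ _ := measureReal_mono Ioo_subset_Ioi_self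

lemma cauchyMeasure_abs_gt_le {γ : ℝ≥0} (hγ : γ ≠ 0) {x : ℝ} (hx : 0 < x) :
    (cauchyMeasure 0 γ).real {y | x < |y|} ≤ 4 * γ / x := by
  have hγ' : (0 : ℝ) < γ := by positivity
  refine (measureReal_abs_gt_le_integral_charFun hx).trans ?_
  have hb : ∀ t ∈ Set.uIoc (-2 * x⁻¹) (2 * x⁻¹),
      ‖1 - charFun (cauchyMeasure 0 γ) t‖ ≤ γ * (2 * x⁻¹) := by
    intro t ht
    have hle : -2 * x⁻¹ ≤ 2 * x⁻¹ := by have : 0 < x⁻¹ := by positivity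
                                        linarith
    rw [uIoc_of_le hle] at ht
    have habs : |t| ≤ 2 * x⁻¹ := by rw [abs_le]; constructor <;> linarith [ht.1, ht.2]
    rw [charFun_cauchyMeasure hγ, ← Complex.ofReal_exp, ← Complex.ofReal_one,
      ← Complex.ofReal_sub, Complex.norm_real, Real.norm_eq_abs, abs_of_nonneg]
    · have := Real.add_one_le_exp (-(γ * |t|))
      have h2 : γ * |t| ≤ γ * (2 * x⁻¹) := by gcongr
      linarith
    · have : Real.exp (-(γ * |t|)) ≤ 1 := Real.exp_le_one_iff.2 (by
        have : 0 ≤ γ * |t| := by positivity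
        linarith)
      linarith
  have := intervalIntegral.norm_integral_le_of_norm_le_const hb
  calc _ ≤ 2⁻¹ * x * (γ * (2 * x⁻¹) * |2 * x⁻¹ - -2 * x⁻¹|) := by gcongr
    _ = 4 * γ / x := by
      rw [abs_of_pos (by have : 0 < x⁻¹ := by positivity
                         linarith)]
      field_simp; ring

lemma integrable_sqrt_abs_cauchyMeasure :
    Integrable (fun x : ℝ => √|x|) (cauchyMeasure 0 (1 / 2)) := by
  have hγ : (1 / 2 : ℝ≥0) ≠ 0 := by positivity
  rw [cauchyMeasure_of_scale_ne_zero 0 hγ, integrable_withDensity_iff (measurable_cauchyPDF _ _)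
    (Eventually.of_forall fun x => by rw [cauchyPDF_def]; exact ENNReal.ofReal_lt_top)]
  have hI := integrable_rpow_neg_one_add_norm_sq (E := ℝ) (μ := volume) (r := 3 / 2)
    (by norm_num)
  refine hI.mono' ?_ (Eventually.of_forall fun x => ?_)
  · exact ((by fun_prop : Measurable fun x : ℝ => √|x|).mul
      (measurable_cauchyPDF _ _).ennreal_toReal).aestronglyMeasurable
  have hv : 0 ≤ cauchyPDFReal 0 (1 / 2) x := by rw [cauchyPDFReal_def]; positivity
  rw [cauchyPDF_def, ENNReal.toReal_ofReal hv, Real.norm_eq_abs,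
    abs_of_nonneg (mul_nonneg (Real.sqrt_nonneg _) hv), Real.norm_eq_abs, sq_abs]
  have hx : 0 < 1 + x ^ 2 := by positivity
  have h1 : √|x| ≤ (1 + x ^ 2) ^ (1 / 4 : ℝ) := by
    rw [Real.sqrt_eq_rpow]
    calc |x| ^ (1 / 2 : ℝ) = (|x| ^ (2 : ℝ)) ^ (1 / 4 : ℝ) := by
          rw [← Real.rpow_mul (abs_nonneg x)]; norm_num
      _ ≤ _ := by
          gcongr
          rw [Real.rpow_two, sq_abs]; linarith
  have h2 : cauchyPDFReal 0 (1 / 2) x ≤ (1 + x ^ 2) ^ (-1 : ℝ) := by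
    rw [cauchyPDFReal_def, Real.rpow_neg_one]
    push_cast
    have hpi := Real.pi_gt_three
    rw [← one_div, ← one_div, ← one_div, div_mul_div_comm, div_mul_div_comm,
      div_le_div_iff₀ (by positivity) (by positivity)]
    nlinarith [sq_nonneg x]
  calc _ ≤ (1 + x ^ 2) ^ (1 / 4 : ℝ) * (1 + x ^ 2) ^ (-1 : ℝ) := by gcongr
    _ = _ := by rw [← Real.rpow_add hx]; norm_num

/-! ### The law of the increments -/

section CauchyPaths

variable {Ω : Type*} [MeasurableSpace Ω] {P : Measure Ω} [IsProbabilityMeasure P]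
  {ρ : ℝ} {X : ℝ → Ω → ℝ}

/-- The exponent `stableExponent 1 ρ` takes the same value at `1` and `-1`, whereas a
characteristic function takes conjugate values there. Hence `exp (-Ψ 1)` is real, which for
`ρ ∈ (0, 1)` leaves only the symmetric case. -/
lemma IsStableProcess.rho_eq_half (hρ : ρ ∈ Set.Ioo (0 : ℝ) 1) (hX : IsStableProcess 1 ρ 0 P X) :
    ρ = 1 / 2 := by
  have h1 := hX.charFun 0 1 le_rfl zero_le_one 1
  have h2 := hX.charFun 0 1 le_rfl zero_le_one (-1)
  have hc : ∫ ω, Complex.exp (Complex.I * ((-1 : ℝ) : ℂ) * (X 1 ω - X 0 ω)) ∂P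
      = (starRingEnd ℂ) (∫ ω, Complex.exp (Complex.I * ((1 : ℝ) : ℂ) * (X 1 ω - X 0 ω)) ∂P) := by
    rw [← integral_conj]
    congr 1
    ext ω
    rw [← Complex.exp_conj]
    congr 1
    simp
  rw [h1, h2, ← Complex.exp_conj] at hc
  set θ : ℝ := π * (1 / 2 - ρ) with hθ
  have e1 : stableExponent 1 ρ 1 = Complex.exp ((θ : ℂ) * Complex.I) := by
    simp [stableExponent, hθ]; ring_nf
  have e2 : stableExponent 1 ρ (-1) = Complex.exp ((θ : ℂ) * Complex.I) := by
    have : ¬ (0 : ℝ) ≤ -1 := by norm_num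
    simp [stableExponent, hθ, this]; ring_nf
  rw [e1, e2] at hc
  have hc' := congrArg Complex.im hc
  simp only [sub_zero, Complex.ofReal_one, one_mul, map_neg, Complex.exp_im, Complex.neg_im,
    Complex.neg_re, Complex.conj_re, Complex.conj_im, neg_neg, Complex.exp_ofReal_mul_I_re,
    Complex.re_ofReal_mul, Complex.im_ofReal_mul, Complex.I_re, Complex.I_im, mul_zero, mul_one,
    Real.exp_zero, Real.sin_neg] at hc'
  have hs : Real.sin (Real.sin θ) = 0 := by
    have := Real.exp_pos (-Real.cos θ)
    have h3 : Real.exp (-Real.cos θ) * Real.sin (Real.sin θ) = 0 := by linarith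
    exact (mul_eq_zero.1 h3).resolve_left this.ne'
  have hpi := Real.pi_gt_three
  have hs1 : Real.sin θ = 0 := by
    refine (Real.sin_eq_zero_iff_of_lt_of_lt ?_ ?_).1 hs
    · linarith [Real.neg_one_le_sin θ]
    · linarith [Real.sin_le_one θ]
  have hθ0 : θ = 0 := by
    refine (Real.sin_eq_zero_iff_of_lt_of_lt ?_ ?_).1 hs1
    · rw [hθ]; nlinarith [hρ.1, hρ.2]
    · rw [hθ]; nlinarith [hρ.1, hρ.2]
  rw [hθ] at hθ0
  have := (mul_eq_zero.1 hθ0).resolve_left Real.pi_ne_zero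
  linarith

lemma stableExponent_one_half (z : ℝ) : stableExponent 1 (1 / 2) z = (|z| : ℝ) := by
  unfold stableExponent
  split_ifs
  · simp
  · simp; norm_num

lemma IsStableProcess.map_increment (hρ : ρ ∈ Set.Ioo (0 : ℝ) 1)
    (hX : IsStableProcess 1 ρ 0 P X) {s t : ℝ} (hs : 0 ≤ s) (hst : s < t) :
    P.map (fun ω => X t ω - X s ω) = cauchyMeasure 0 (t - s).toNNReal := by
  have hm : Measurable (fun ω => X t ω - X s ω) := (hX.measurable t).sub (hX.measurable s)
  have := Measure.isProbabilityMeasure_map (μ := P) hm.aemeasurable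
  have hγ : (t - s).toNNReal ≠ 0 := by simpa using hst
  refine Measure.ext_of_charFun ?_
  ext z
  rw [charFun_cauchyMeasure hγ, charFun_apply_real, integral_map hm.aemeasurable (by fun_prop)]
  have h := hX.charFun s t hs hst.le z
  rw [hX.rho_eq_half hρ, stableExponent_one_half] at h
  rw [Real.coe_toNNReal _ (by linarith)]
  push_cast at h ⊢
  rw [← h]
  congr 1
  ext ω
  congr 1
  ring

end CauchyPaths

/-! ### Grid crossings and upcrossings of càdlàg paths -/

/-- The `k`-th point of the subdivision of `[s, 2s]` into `m` intervals of equal length. -/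
noncomputable def gridPt (s : ℝ) (m k : ℕ) : ℝ := s + k * (s / m)

lemma gridPt_mono {s : ℝ} (hs : 0 < s) (m : ℕ) {j k : ℕ} (h : j ≤ k) :
    gridPt s m j ≤ gridPt s m k := by
  unfold gridPt
  have : (j : ℝ) ≤ k := by exact_mod_cast h
  gcongr

lemma gridPt_succ_sub (s : ℝ) (m k : ℕ) : gridPt s m (k + 1) - gridPt s m k = s / m := by
  unfold gridPt; push_cast; ring

lemma le_gridPt {s : ℝ} (hs : 0 < s) (m k : ℕ) : s ≤ gridPt s m k := by
  unfold gridPt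
  have : 0 ≤ (k : ℝ) * (s / m) := by positivity
  linarith

lemma gridPt_le {s : ℝ} (hs : 0 < s) {m k : ℕ} (hk : k ≤ m) : gridPt s m k ≤ 2 * s := by
  rcases Nat.eq_zero_or_pos m with rfl | hm
  · simp [gridPt]; linarith
  · unfold gridPt
    have h1 : (k : ℝ) ≤ m := by exact_mod_cast hk
    have hm' : (0 : ℝ) < m := by exact_mod_cast hm
    have : (k : ℝ) * (s / m) ≤ m * (s / m) := by gcongr
    have h2 : (m : ℝ) * (s / m) = s := by field_simp
    linarith

/-- On a fine enough subdivision, every grid interval across which a càdlàg path moves from below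
`-ε` to above `ε` contains a jump from a negative left limit to a positive value: by compactness
of `[s, 2s]`, each small interval lies in a neighbourhood of some `t` on which the path is within
`ε` of `x t` to the right of `t` and within `ε` of the left limit at `t` to the left of `t`. -/
lemma eventually_card_le_encard {x : ℝ → ℝ}
    (hr : ∀ t : ℝ, 0 ≤ t → ContinuousWithinAt x (Set.Ici t) t)
    (hl : ∀ t : ℝ, 0 < t → ∃ l : ℝ, Tendsto x (𝓝[<] t) (𝓝 l))
    {s ε : ℝ} (hs : 0 < s) (hε : 0 < ε) :
    ∀ᶠ m : ℕ in atTop,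
      (((Finset.range m).filter
        (fun k => x (gridPt s m k) < -ε ∧ ε < x (gridPt s m (k + 1)))).card : ℕ∞) ≤
      {t : ℝ | t ∈ Ioc s (2 * s) ∧ Function.leftLim x t < 0 ∧ 0 < x t}.encard := by
  classical
  have hloc : ∀ t : Icc s (2 * s), ∃ r > 0, ∃ l : ℝ, Tendsto x (𝓝[<] (t : ℝ)) (𝓝 l) ∧
      (∀ y ∈ Metric.ball (t : ℝ) r, (t : ℝ) ≤ y → |x y - x t| < ε) ∧
      (∀ y ∈ Metric.ball (t : ℝ) r, y < (t : ℝ) → |x y - l| < ε) := by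
    intro t
    have ht0 : 0 < (t : ℝ) := hs.trans_le t.2.1
    obtain ⟨l, hl⟩ := hl t ht0
    have h1 := (Metric.tendsto_nhdsWithin_nhds.1 (hr t ht0.le)) ε hε
    have h2 := (Metric.tendsto_nhdsWithin_nhds.1 hl) ε hε
    obtain ⟨r1, hr1, h1⟩ := h1
    obtain ⟨r2, hr2, h2⟩ := h2
    refine ⟨min r1 r2, lt_min hr1 hr2, l, hl, fun y hy hty => ?_, fun y hy hyt => ?_⟩
    · exact h1 hty (lt_of_lt_of_le hy (min_le_left _ _))
    · exact h2 hyt (lt_of_lt_of_le hy (min_le_right _ _))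
  choose r hr0 l hlim hR hL using hloc
  obtain ⟨δ, hδ, hleb⟩ := lebesgue_number_lemma_of_metric
    (s := Icc s (2 * s)) (c := fun t : Icc s (2 * s) => Metric.ball (t : ℝ) (r t)) isCompact_Icc
    (fun _ => Metric.isOpen_ball)
    (fun t ht => mem_iUnion.2 ⟨⟨t, ht⟩, Metric.mem_ball_self (hr0 _)⟩)
  have hm : ∀ᶠ m : ℕ in atTop, s / m < δ := by
    have := (tendsto_const_div_atTop_nhds_zero_nat s).eventually (gt_mem_nhds hδ)
    exact this
  filter_upwards [hm] with m hm
  set S := {t : ℝ | t ∈ Ioc s (2 * s) ∧ Function.leftLim x t < 0 ∧ 0 < x t} with hS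
  set A := (Finset.range m).filter
        (fun k => x (gridPt s m k) < -ε ∧ ε < x (gridPt s m (k + 1))) with hA
  have key : ∀ k ∈ A, ∃ t ∈ S, gridPt s m k < t ∧ t ≤ gridPt s m (k + 1) := by
    intro k hk
    obtain ⟨hkm, hx1, hx2⟩ := Finset.mem_filter.1 hk
    rw [Finset.mem_range] at hkm
    have hmem : gridPt s m k ∈ Icc s (2 * s) := ⟨le_gridPt hs m k, gridPt_le hs hkm.le⟩
    obtain ⟨t, ht⟩ := hleb _ hmem
    have hu : gridPt s m k ∈ Metric.ball (t : ℝ) (r t) := ht (Metric.mem_ball_self hδ)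
    have hv : gridPt s m (k + 1) ∈ Metric.ball (t : ℝ) (r t) := by
      refine ht ?_
      rw [Metric.mem_ball, Real.dist_eq, gridPt_succ_sub, abs_of_nonneg (by positivity)]
      exact hm
    have huv := gridPt_mono hs m (Nat.le_succ k)
    have hut : gridPt s m k < t := by
      by_contra! h
      have a1 := abs_lt.1 (hR t _ hu h)
      have a2 := abs_lt.1 (hR t _ hv (h.trans huv))
      linarith [a1.1, a1.2, a2.1, a2.2]
    have htv : (t : ℝ) ≤ gridPt s m (k + 1) := by
      by_contra! h
      have a1 := abs_lt.1 (hL t _ hu hut)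
      have a2 := abs_lt.1 (hL t _ hv h)
      linarith [a1.1, a1.2, a2.1, a2.2]
    have a1 := abs_lt.1 (hL t _ hu hut)
    have a2 := abs_lt.1 (hR t _ hv htv)
    refine ⟨t, ⟨⟨(le_gridPt hs m k).trans_lt hut, t.2.2⟩, ?_, ?_⟩, hut, htv⟩
    · rw [leftLim_eq_of_tendsto (hlim t)]
      linarith [a1.1]
    · linarith [a2.2]
  choose! f hf1 hf2 hf3 using key
  rw [← Set.encard_coe_eq_coe_finsetCard]
  refine Set.encard_le_encard_of_injOn (f := f) (fun k hk => hf1 k hk) ?_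
  intro j hj k hk hjk
  rcases lt_trichotomy j k with h | h | h
  · have := gridPt_mono hs m (Nat.succ_le_of_lt h)
    have h1 := hf3 j hj
    have h2 := hf2 k hk
    rw [hjk] at h1
    exact absurd (h1.trans this) (not_le.2 h2)
  · exact h
  · have := gridPt_mono hs m (Nat.succ_le_of_lt h)
    have h1 := hf3 k hk
    have h2 := hf2 j hj
    rw [← hjk] at h1
    exact absurd (h1.trans this) (not_le.2 h2)

/-! ### The past of the process and the grid count -/

/-- The σ-algebra generated by `X u`, `0 ≤ u ≤ s`. -/
@[reducible] def past {Ω : Type*} (X : ℝ → Ω → ℝ) (s : ℝ) : MeasurableSpace Ω :=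
  ⨆ u ∈ Set.Icc (0 : ℝ) s, MeasurableSpace.comap (X u) inferInstance

lemma past_mono {Ω : Type*} (X : ℝ → Ω → ℝ) {s t : ℝ} (h : s ≤ t) : past X s ≤ past X t :=
  biSup_mono fun _ hu => ⟨hu.1, hu.2.trans h⟩

lemma measurable_past {Ω : Type*} (X : ℝ → Ω → ℝ) {s u : ℝ} (h0 : 0 ≤ u) (h : u ≤ s) :
    Measurable[past X s] (X u) := by
  refine measurable_iff_comap_le.2 ?_
  exact le_iSup₂_of_le u ⟨h0, h⟩ le_rfl

/-- The event that the path is below `-ε` at the left endpoint and above `ε` at the right endpoint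
of the `k`-th grid interval. -/
def crossSet {Ω : Type*} (X : ℝ → Ω → ℝ) (s ε : ℝ) (m k : ℕ) : Set Ω :=
  {ω | X (gridPt s m k) ω < -ε ∧ ε < X (gridPt s m (k + 1)) ω}

/-- The number of grid intervals of `[s, 2s]` over which the path moves from below `-ε` to above
`ε`. -/
noncomputable def gridCount {Ω : Type*} (X : ℝ → Ω → ℝ) (s ε : ℝ) (m : ℕ) (ω : Ω) : ℝ :=
  ∑ k ∈ Finset.range m, (crossSet X s ε m k).indicator 1 ω

lemma gridCount_nonneg {Ω : Type*} (X : ℝ → Ω → ℝ) (s ε : ℝ) (m : ℕ) (ω : Ω) :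
    0 ≤ gridCount X s ε m ω :=
  Finset.sum_nonneg fun _ _ => indicator_nonneg (fun _ _ => zero_le_one) _

lemma gridCount_le {Ω : Type*} (X : ℝ → Ω → ℝ) (s ε : ℝ) (m : ℕ) (ω : Ω) :
    gridCount X s ε m ω ≤ m := by
  calc gridCount X s ε m ω ≤ ∑ k ∈ Finset.range m, (1 : ℝ) :=
        Finset.sum_le_sum fun k _ => indicator_le_self' (by simp) ω
    _ = m := by simp

lemma measurableSet_crossSet {Ω : Type*} (X : ℝ → Ω → ℝ) {s : ℝ} (hs : 0 < s) (ε : ℝ) {m k : ℕ}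
    (hk : k < m) : MeasurableSet[past X (2 * s)] (crossSet X s ε m k) := by
  have h1 := measurable_past X (hs.le.trans (le_gridPt hs m k)) (gridPt_le hs hk.le)
  have h2 := measurable_past X (hs.le.trans (le_gridPt hs m (k + 1))) (gridPt_le hs hk)
  exact MeasurableSet.inter (h1 measurableSet_Iio) (h2 measurableSet_Ioi)

lemma measurable_gridCount {Ω : Type*} (X : ℝ → Ω → ℝ) {s : ℝ} (hs : 0 < s) (ε : ℝ) (m : ℕ) :
    Measurable[past X (2 * s)] (gridCount X s ε m) := by
  let _ := past X (2 * s)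
  unfold gridCount
  refine Finset.measurable_sum _ fun k hk => ?_
  exact measurable_one.indicator (measurableSet_crossSet X hs ε (Finset.mem_range.1 hk))

section CauchyPaths

variable {Ω : Type*} [MeasurableSpace Ω] {P : Measure Ω} [IsProbabilityMeasure P]
  {ρ : ℝ} {X : ℝ → Ω → ℝ}

omit [IsProbabilityMeasure P] in
lemma IsStableProcess.past_le (hX : IsStableProcess 1 ρ 0 P X) (s : ℝ) :
    past X s ≤ ‹MeasurableSpace Ω› :=
  iSup₂_le fun u _ => (hX.measurable u).comap_le

lemma IsStableProcess.measureReal_inter_increment (hρ : ρ ∈ Set.Ioo (0 : ℝ) 1)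
    (hX : IsStableProcess 1 ρ 0 P X) {s t : ℝ} (hs : 0 ≤ s) (hst : s < t) {A : Set Ω}
    (hA : MeasurableSet[past X s] A) {C : Set ℝ} (hC : MeasurableSet C) :
    P.real (A ∩ {ω | X t ω - X s ω ∈ C})
      = P.real A * (cauchyMeasure 0 (t - s).toNNReal).real C := by
  have hm : Measurable (fun ω => X t ω - X s ω) := (hX.measurable t).sub (hX.measurable s)
  have h := (Indep_iff _ _ P).1 (hX.indep s t hs hst.le) A
    {ω | X t ω - X s ω ∈ C} hA ⟨C, hC, rfl⟩
  rw [measureReal_def, h, ENNReal.toReal_mul, ← hX.map_increment hρ hs hst, measureReal_def,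
    measureReal_def, Measure.map_apply hm hC]
  rfl

/-- On an event `A` of the past up to time `s` on which `|X s| ≤ R`, the position at time `t` has a
density bounded below on bounded sets; this is obtained by integrating the law of the increment
against the law of `(1_A, X s)`, which is independent of it. -/
lemma IsStableProcess.measureReal_inter_Ioo_ge (hρ : ρ ∈ Set.Ioo (0 : ℝ) 1)
    (hX : IsStableProcess 1 ρ 0 P X) {s t : ℝ} (hs : 0 ≤ s) (hst : s < t) {A : Set Ω}
    (hA : MeasurableSet[past X s] A) {R x : ℝ} (hAR : ∀ ω ∈ A, |X s ω| ≤ R) (hx : 0 ≤ x) :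
    (t - s) / (π * ((t - s) ^ 2 + (R + 2 * x) ^ 2)) * x * P.real A ≤
      P.real (A ∩ {ω | X t ω ∈ Ioo (-(2 * x)) (-x)}) := by
  set γ := (t - s).toNNReal with hγd
  have hγ : γ ≠ 0 := by simpa [hγd] using hst
  have hγr : (γ : ℝ) = t - s := Real.coe_toNNReal _ (by linarith)
  set f : Ω → ℝ × ℝ := fun ω => (A.indicator 1 ω, X s ω) with hf
  have hfm : Measurable[past X s] f := by
    let _ := past X s
    exact (measurable_one.indicator hA).prodMk (measurable_past X hs le_rfl)
  have hfm' : Measurable f := hfm.mono (hX.past_le s) le_rfl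
  set ξ : Ω → ℝ := fun ω => X t ω - X s ω with hξ
  have hξm : Measurable ξ := (hX.measurable t).sub (hX.measurable s)
  have hind : IndepFun f ξ P := by
    refine (IndepFun_iff_Indep _ _ _).2 ?_
    exact indep_of_indep_of_le_left (hX.indep s t hs hst.le) hfm.comap_le
  have hmap := (indepFun_iff_map_prod_eq_prod_map_map hfm'.aemeasurable hξm.aemeasurable).1 hind
  rw [hX.map_increment hρ hs hst] at hmap
  set E : Set ((ℝ × ℝ) × ℝ) := {p | p.1.1 = 1 ∧ p.1.2 + p.2 ∈ Ioo (-(2 * x)) (-x)} with hE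
  have hEm : MeasurableSet E := by
    refine MeasurableSet.inter ?_ ?_
    · exact (by fun_prop : Measurable fun p : (ℝ × ℝ) × ℝ => p.1.1) (measurableSet_singleton 1)
    · exact (by fun_prop : Measurable fun p : (ℝ × ℝ) × ℝ => p.1.2 + p.2) measurableSet_Ioo
  have hset : A ∩ {ω | X t ω ∈ Ioo (-(2 * x)) (-x)} = (fun ω => (f ω, ξ ω)) ⁻¹' E := by
    ext ω
    by_cases hω : ω ∈ A <;> simp [hE, hf, hξ, hω]
  have hval : P (A ∩ {ω | X t ω ∈ Ioo (-(2 * x)) (-x)})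
      = ∫⁻ ω, cauchyMeasure 0 γ (Prod.mk (f ω) ⁻¹' E) ∂P := by
    rw [hset, ← Measure.map_apply (hfm'.prodMk hξm) hEm, hmap, Measure.prod_apply hEm,
      lintegral_map (measurable_measure_prodMk_left hEm) hfm']
  set c : ℝ := (t - s) / (π * ((t - s) ^ 2 + (R + 2 * x) ^ 2)) * x with hc
  have hc0 : 0 ≤ c := by
    have : 0 < t - s := by linarith
    positivity
  have hge : ENNReal.ofReal c * P A ≤ P (A ∩ {ω | X t ω ∈ Ioo (-(2 * x)) (-x)}) := by
    rw [hval, ← setLIntegral_const]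
    refine le_trans (setLIntegral_mono' (hX.past_le s _ hA) fun ω hω => ?_)
      (setLIntegral_le_lintegral A _)
    have hpre : Prod.mk (f ω) ⁻¹' E = Ioo (-(2 * x) - X s ω) (-x - X s ω) := by
      ext y
      simp only [hE, hf, mem_preimage, mem_ofPred_eq, indicator_of_mem hω, Pi.one_apply, true_and,
        mem_Ioo]
      constructor <;> rintro ⟨h1, h2⟩ <;> constructor <;> linarith
    have hR := abs_le.1 (hAR ω hω)
    have := cauchyMeasure_Ioo_ge hγ (u := -(2 * x) - X s ω) (v := -x - X s ω) (r := R + 2 * x)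
      (by linarith [hR.2]) (by linarith [hR.1])
    rw [hpre, ENNReal.ofReal_le_iff_le_toReal (measure_ne_top _ _), ← measureReal_def]
    rw [hγr] at this
    refine le_trans (le_of_eq ?_) this
    rw [hc]; ring
  rw [measureReal_def, measureReal_def]
  have := ENNReal.toReal_mono (measure_ne_top _ _) hge
  rwa [ENNReal.toReal_mul, ENNReal.toReal_ofReal hc0] at this

end CauchyPaths

/-! ### Moments of the grid count in one block -/

section Block

variable {Ω : Type*} [MeasurableSpace Ω] {P : Measure Ω} [IsProbabilityMeasure P]
  {ρ : ℝ} {X : ℝ → Ω → ℝ}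

/-- Each dyadic scale `2 ^ i * ε * s`, `i < I`, contributes the same order `1 / m` to the
probability of crossing during one grid interval: being at distance about `y` below `0` has
probability of order `y / s`, and jumping over that distance has probability of order
`s / (m * y)`. The constant `30` collects the factor `5 * 3` of the tail bound at `3 * x` and the
factor `2` from `s / 2 ≤ u - s`. -/
lemma IsStableProcess.measureReal_crossSet_ge (hρ : ρ ∈ Set.Ioo (0 : ℝ) 1)
    (hX : IsStableProcess 1 ρ 0 P X) {s L : ℝ} (hs : 0 < s) (hL : 0 ≤ L) (I : ℕ) {B : Set Ω}
    (hB : MeasurableSet[past X s] B) (hBL : ∀ ω ∈ B, |X s ω| ≤ L * s) {m k : ℕ} (hm : 0 < m)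
    (hmI : (2 : ℝ) ^ I ≤ m) (hk : k < m) (hk2 : m ≤ 2 * k) :
    I * (1 / (30 * π ^ 2 * (1 + (L + 1) ^ 2)) / m) * P.real B ≤
      P.real (B ∩ crossSet X s (s / 2 ^ I) m k) := by
  have hm' : (0 : ℝ) < m := by exact_mod_cast hm
  have hpi := Real.pi_pos
  set u := gridPt s m k with hu
  set v := gridPt s m (k + 1) with hv
  have hvu : v - u = s / m := gridPt_succ_sub s m k
  have hsm : 0 < s / m := by positivity
  have huv : u < v := by linarith
  have hu0 : 0 ≤ u := hs.le.trans (le_gridPt hs m k)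
  have hus : u - s = k * (s / m) := by rw [hu, gridPt]; ring
  have hus1 : u - s ≤ s := by linarith [gridPt_le hs hk.le]
  have hus2 : s / 2 ≤ u - s := by
    have : (m : ℝ) ≤ 2 * k := by exact_mod_cast hk2
    rw [hus]
    calc s / 2 = (m / 2 : ℝ) * (s / m) := by field_simp
      _ ≤ k * (s / m) := by gcongr; linarith
  set x : ℕ → ℝ := fun i => 2 ^ i * (s / 2 ^ I) with hx
  have hx0 : ∀ i, 0 < x i := fun i => by simp only [hx]; positivity
  have hxs : ∀ i, x (i + 1) = 2 * x i := fun i => by simp only [hx]; ring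
  have hxmono : ∀ {i j}, i ≤ j → x i ≤ x j := fun {i j} h => by
    simp only [hx]
    gcongr
    norm_num
  have hxI : x I = s := by simp only [hx]; field_simp
  have hx00 : x 0 = s / 2 ^ I := by simp [hx]
  set A : ℕ → Set Ω := fun i => B ∩ {ω | X u ω ∈ Ioo (-(2 * x i)) (-(x i))} with hA
  have hAm : ∀ i, MeasurableSet[past X u] (A i) := fun i =>
    MeasurableSet.inter (past_mono X (le_gridPt hs m k) _ hB)
      (measurable_past X hu0 le_rfl measurableSet_Ioo)
  set E : ℕ → Set Ω := fun i => A i ∩ {ω | X v ω - X u ω ∈ Ioi (3 * x i)} with hE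
  have hEm : ∀ i, MeasurableSet (E i) := fun i => (hX.past_le u _ (hAm i)).inter
    (((hX.measurable v).sub (hX.measurable u)) measurableSet_Ioi)
  have hEP : ∀ i ∈ Finset.range I,
      1 / (30 * π ^ 2 * (1 + (L + 1) ^ 2)) / m * P.real B ≤ P.real (E i) := by
    intro i hi
    have hi' : 2 * x i ≤ s := by
      rw [← hxs, ← hxI]; exact hxmono (Finset.mem_range.1 hi)
    have h1 := hX.measureReal_inter_Ioo_ge hρ hs.le (by linarith : s < u) hB hBL (hx0 i).le
    have hγ : (v - u).toNNReal ≠ 0 := by simpa using huv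
    have hγr : ((v - u).toNNReal : ℝ) = s / m := by
      rw [Real.coe_toNNReal _ (by linarith), hvu]
    have h2 := cauchyMeasure_Ioi_ge hγ (x := 3 * x i) (by
      rw [hγr]
      have : s / m ≤ x 0 := by rw [hx00]; gcongr
      have h0 := hxmono (Nat.zero_le i)
      linarith [hx0 i])
    rw [hγr] at h2
    rw [hE]
    simp only
    rw [hX.measureReal_inter_increment hρ hu0 huv (hAm i) measurableSet_Ioi]
    have h3 : (s / 2) / (π * (s ^ 2 + (L * s + s) ^ 2)) * x i * P.real B ≤ P.real (A i) := by
      refine le_trans ?_ h1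
      have : 0 < u - s := by linarith
      have := hx0 i
      gcongr
    calc 1 / (30 * π ^ 2 * (1 + (L + 1) ^ 2)) / m * P.real B
        = ((s / 2) / (π * (s ^ 2 + (L * s + s) ^ 2)) * x i * P.real B) *
          (s / m / (5 * π * (3 * x i))) := by
          have := (hx0 i).ne'
          have e : s ^ 2 + (L * s + s) ^ 2 = s ^ 2 * (1 + (L + 1) ^ 2) := by ring
          rw [e]
          field_simp
          ring
      _ ≤ _ := by
          have := hx0 i
          gcongr
  have hdisj : Set.PairwiseDisjoint (↑(Finset.range I)) E := by
    have key : ∀ i j, i < j → Disjoint (E i) (E j) := by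
      intro i j hij
      rw [Set.disjoint_left]
      rintro ω ⟨⟨-, h1⟩, -⟩ ⟨⟨-, h2⟩, -⟩
      have := hxmono (Nat.succ_le_of_lt hij)
      rw [Nat.succ_eq_add_one, hxs] at this
      have h1 := h1.1
      have h2 := h2.2
      linarith
    intro i _ j _ hij
    rcases lt_or_gt_of_ne hij with h | h
    · exact key i j h
    · exact (key j i h).symm
  calc I * (1 / (30 * π ^ 2 * (1 + (L + 1) ^ 2)) / m) * P.real B
      = ∑ i ∈ Finset.range I, 1 / (30 * π ^ 2 * (1 + (L + 1) ^ 2)) / m * P.real B := by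
        simp; ring
    _ ≤ ∑ i ∈ Finset.range I, P.real (E i) := Finset.sum_le_sum hEP
    _ = P.real (⋃ i ∈ Finset.range I, E i) :=
        (measureReal_biUnion_finset hdisj fun i _ => hEm i).symm
    _ ≤ _ := by
        refine measureReal_mono (iUnion₂_subset fun i _ => ?_)
        rintro ω ⟨⟨hωB, h1⟩, h2⟩
        have h0 := hxmono (Nat.zero_le i)
        have h1l := h1.1
        have h1r := h1.2
        have h2 : 3 * x i < X v ω - X u ω := h2
        refine ⟨hωB, ?_, ?_⟩
        · rw [← hx00, ← hu]; linarith
        · rw [← hx00, ← hv]; linarith [hx0 i]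

lemma IsStableProcess.measureReal_inter_crossSet_le (hρ : ρ ∈ Set.Ioo (0 : ℝ) 1)
    (hX : IsStableProcess 1 ρ 0 P X) {s ε : ℝ} (hs : 0 < s) (hε : 0 < ε) {m k : ℕ} (hm : 0 < m)
    {A : Set Ω} (hA : MeasurableSet[past X (gridPt s m k)] A) :
    P.real (A ∩ crossSet X s (ε * s) m k) ≤ P.real A * (2 / (m * ε)) := by
  have hm' : (0 : ℝ) < m := by exact_mod_cast hm
  set u := gridPt s m k with hu
  set v := gridPt s m (k + 1) with hv
  have hvu : v - u = s / m := gridPt_succ_sub s m k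
  have hsm : 0 < s / m := by positivity
  have huv : u < v := by linarith
  have hu0 : 0 ≤ u := hs.le.trans (le_gridPt hs m k)
  have hγ : (v - u).toNNReal ≠ 0 := by simpa using huv
  have hγr : ((v - u).toNNReal : ℝ) = s / m := by
    rw [Real.coe_toNNReal _ (by linarith), hvu]
  have hC : MeasurableSet {y : ℝ | 2 * (ε * s) < |y|} :=
    measurableSet_lt measurable_const (by fun_prop)
  calc P.real (A ∩ crossSet X s (ε * s) m k)
      ≤ P.real (A ∩ {ω | X v ω - X u ω ∈ {y : ℝ | 2 * (ε * s) < |y|}}) := by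
        refine measureReal_mono (inter_subset_inter_right _ ?_)
        rintro ω ⟨h1, h2⟩
        rw [← hu] at h1
        rw [← hv] at h2
        change 2 * (ε * s) < |X v ω - X u ω|
        linarith [le_abs_self (X v ω - X u ω)]
    _ ≤ P.real A * (4 * (s / m) / (2 * (ε * s))) := by
        rw [hX.measureReal_inter_increment hρ hu0 huv hA hC, ← hγr]
        gcongr
        exact cauchyMeasure_abs_gt_le hγ (by positivity)
    _ = _ := by field_simp; ring

lemma integrable_gridCount (hX : IsStableProcess 1 ρ 0 P X) {s ε : ℝ} (hs : 0 < s) (m : ℕ) :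
    Integrable (gridCount X s ε m) P := by
  refine Integrable.of_bound (C := m)
    ((measurable_gridCount X hs ε m).mono (hX.past_le _) le_rfl).aestronglyMeasurable
    (Eventually.of_forall fun ω => ?_)
  rw [Real.norm_eq_abs, abs_of_nonneg (gridCount_nonneg X s ε m ω)]
  exact gridCount_le X s ε m ω

lemma setIntegral_gridCount (hX : IsStableProcess 1 ρ 0 P X) {s ε : ℝ} (hs : 0 < s) (m : ℕ)
    {B : Set Ω} :
    ∫ ω in B, gridCount X s ε m ω ∂P
      = ∑ k ∈ Finset.range m, P.real (B ∩ crossSet X s ε m k) := by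
  have hmeas : ∀ k ∈ Finset.range m, MeasurableSet (crossSet X s ε m k) := fun k hk =>
    hX.past_le _ _ (measurableSet_crossSet X hs ε (Finset.mem_range.1 hk))
  unfold gridCount
  rw [integral_finsetSum]
  · refine Finset.sum_congr rfl fun k hk => ?_
    rw [integral_indicator_one (hmeas k hk), measureReal_restrict_apply (hmeas k hk), inter_comm]
  · intro k hk
    exact (integrable_const 1).indicator (hmeas k hk)

/-- A second moment bound uniform in the mesh: by independence of increments, two distinct grid
intervals are both crossed with probability of order `1 / m ^ 2`. -/
lemma IsStableProcess.setIntegral_gridCount_sq_le (hρ : ρ ∈ Set.Ioo (0 : ℝ) 1)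
    (hX : IsStableProcess 1 ρ 0 P X) {s ε : ℝ} (hs : 0 < s) (hε : 0 < ε) {m : ℕ} (hm : 0 < m)
    {B : Set Ω} (hB : MeasurableSet[past X s] B) :
    ∫ ω in B, gridCount X s (ε * s) m ω ^ 2 ∂P ≤ (4 / ε ^ 2 + 2 / ε) * P.real B := by
  have hm' : (0 : ℝ) < m := by exact_mod_cast hm
  have hmeas : ∀ k ∈ Finset.range m, MeasurableSet (crossSet X s (ε * s) m k) := fun k hk =>
    hX.past_le _ _ (measurableSet_crossSet X hs (ε * s) (Finset.mem_range.1 hk))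
  set p : ℝ := 2 / (m * ε) with hp
  have hp0 : 0 ≤ p := by positivity
  set Q := crossSet X s (ε * s) m with hQ
  have hone : ∀ k, P.real (B ∩ Q k) ≤ P.real B * p := fun k =>
    hX.measureReal_inter_crossSet_le hρ hs hε hm (past_mono X (le_gridPt hs m k) _ hB)
  have htwo : ∀ j k, j < k → P.real (B ∩ (Q j ∩ Q k)) ≤ P.real B * p ^ 2 := by
    intro j k hjk
    have hQj : MeasurableSet[past X (gridPt s m k)] (Q j) := by
      have h1 := measurable_past X (hs.le.trans (le_gridPt hs m j)) (gridPt_mono hs m hjk.le)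
      have h2 := measurable_past X (hs.le.trans (le_gridPt hs m (j + 1)))
        (gridPt_mono hs m (Nat.succ_le_of_lt hjk))
      exact MeasurableSet.inter (h1 measurableSet_Iio) (h2 measurableSet_Ioi)
    have hBk : MeasurableSet[past X (gridPt s m k)] (B ∩ Q j) :=
      MeasurableSet.inter (past_mono X (le_gridPt hs m k) _ hB) hQj
    rw [← inter_assoc]
    calc P.real (B ∩ Q j ∩ Q k) ≤ P.real (B ∩ Q j) * p :=
          hX.measureReal_inter_crossSet_le hρ hs hε hm hBk
      _ ≤ P.real B * p * p := by gcongr; exact hone j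
      _ = _ := by ring
  have hbound : ∀ j k, P.real (B ∩ (Q j ∩ Q k)) ≤ P.real B * (p ^ 2 + if j = k then p else 0) := by
    intro j k
    rcases lt_trichotomy j k with h | h | h
    · simpa [h.ne] using htwo j k h
    · subst h
      simp only [inter_self, if_true]
      refine (hone j).trans ?_
      gcongr
      linarith [sq_nonneg p]
    · rw [inter_comm (Q j)]
      simpa [h.ne'] using htwo k j h
  have hsq : ∀ ω, gridCount X s (ε * s) m ω ^ 2
      = ∑ j ∈ Finset.range m, ∑ k ∈ Finset.range m, (Q j ∩ Q k).indicator (1 : Ω → ℝ) ω := by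
    intro ω
    rw [gridCount, sq, Finset.sum_mul_sum]
    refine Finset.sum_congr rfl fun j _ => Finset.sum_congr rfl fun k _ => ?_
    rw [inter_indicator_one]; rfl
  have hint : ∀ j ∈ Finset.range m, ∀ k ∈ Finset.range m,
      Integrable ((Q j ∩ Q k).indicator (1 : Ω → ℝ)) (P.restrict B) := fun j hj k hk =>
    (integrable_const 1).indicator ((hmeas j hj).inter (hmeas k hk))
  simp_rw [hsq]
  rw [integral_finsetSum _ fun j hj => integrable_finsetSum _ fun k hk => hint j hj k hk]
  calc _ = ∑ j ∈ Finset.range m, ∑ k ∈ Finset.range m, P.real (B ∩ (Q j ∩ Q k)) := by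
        refine Finset.sum_congr rfl fun j hj => ?_
        rw [integral_finsetSum _ fun k hk => hint j hj k hk]
        refine Finset.sum_congr rfl fun k hk => ?_
        have := (hmeas j hj).inter (hmeas k hk)
        rw [integral_indicator_one this, measureReal_restrict_apply this, inter_comm]
    _ ≤ ∑ j ∈ Finset.range m, ∑ k ∈ Finset.range m,
          P.real B * (p ^ 2 + if j = k then p else 0) :=
        Finset.sum_le_sum fun j _ => Finset.sum_le_sum fun k _ => hbound j k
    _ = P.real B * (m ^ 2 * p ^ 2 + m * p) := by
        simp_rw [← Finset.mul_sum, Finset.sum_add_distrib]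
        congr 1
        have : ∀ j ∈ Finset.range m, (∑ k ∈ Finset.range m, if j = k then p else 0) = p := by
          intro j hj
          rw [Finset.sum_ite_eq, if_pos hj]
        rw [Finset.sum_congr rfl this]
        simp
        ring
    _ = _ := by rw [hp]; field_simp; ring

/-- Truncating the grid count at a fixed level `M` keeps its conditional mean large, because the
second moment stays bounded as the mesh tends to `0`. -/
lemma IsStableProcess.exists_block_bound (hρ : ρ ∈ Set.Ioo (0 : ℝ) 1)
    (hX : IsStableProcess 1 ρ 0 P X) {L : ℝ} (hL : 0 ≤ L) (K : ℝ) :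
    ∃ ε > 0, ∃ M > 0, ∀ s > 0, ∀ᶠ m : ℕ in atTop, ∀ B : Set Ω, MeasurableSet[past X s] B →
      (∀ ω ∈ B, |X s ω| ≤ L * s) →
      K * P.real B ≤ ∫ ω in B, min (gridCount X s (ε * s) m ω) M ∂P := by
  set c : ℝ := 1 / (30 * π ^ 2 * (1 + (L + 1) ^ 2)) with hc
  have hc0 : 0 < c := by have := Real.pi_pos; positivity
  -- At least a quarter of the grid intervals lie in the second half of the block, so `I` scales
  -- give a mean of at least `I * c / 4`; the surplus `1` in `K + 1` pays for the truncation.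
  obtain ⟨I, hI⟩ := exists_nat_ge ((K + 1) * 4 / c)
  rw [div_le_iff₀ hc0] at hI
  set ε : ℝ := 1 / 2 ^ I with hε
  have hε0 : 0 < ε := by positivity
  set M : ℝ := 4 / ε ^ 2 + 2 / ε with hM
  have hM0 : 0 < M := by positivity
  refine ⟨ε, hε0, M, hM0, fun s hs => ?_⟩
  filter_upwards [eventually_ge_atTop 2, eventually_ge_atTop (2 ^ I)] with m hm2 hmI B hB hBL
  have hm : 0 < m := by omega
  have hm' : (0 : ℝ) < m := by exact_mod_cast hm
  have hes : ε * s = s / 2 ^ I := by rw [hε]; ring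
  have hmean : (K + 1) * P.real B ≤ ∫ ω in B, gridCount X s (ε * s) m ω ∂P := by
    rw [setIntegral_gridCount hX hs]
    have hsub : Finset.Ico ((m + 1) / 2) m ⊆ Finset.range m := fun k hk =>
      Finset.mem_range.2 (Finset.mem_Ico.1 hk).2
    have hcard : (m : ℝ) / 4 ≤ ((Finset.Ico ((m + 1) / 2) m).card : ℝ) := by
      rw [Nat.card_Ico, div_le_iff₀ (by norm_num)]
      have : m ≤ (m - (m + 1) / 2) * 4 := by omega
      exact_mod_cast this
    calc (K + 1) * P.real B ≤ (I * c / 4) * P.real B := by gcongr; linarith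
      _ = m / 4 * (I * (c / m) * P.real B) := by field_simp
      _ ≤ (Finset.Ico ((m + 1) / 2) m).card * (I * (c / m) * P.real B) := by gcongr
      _ = ∑ k ∈ Finset.Ico ((m + 1) / 2) m, I * (c / m) * P.real B := by simp
      _ ≤ ∑ k ∈ Finset.Ico ((m + 1) / 2) m, P.real (B ∩ crossSet X s (ε * s) m k) := by
          refine Finset.sum_le_sum fun k hk => ?_
          obtain ⟨hk1, hk2⟩ := Finset.mem_Ico.1 hk
          rw [hes]
          exact hX.measureReal_crossSet_ge hρ hs hL I hB hBL hm (by exact_mod_cast hmI) hk2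
            (by omega)
      _ ≤ _ := Finset.sum_le_sum_of_subset_of_nonneg hsub fun _ _ _ => measureReal_nonneg
  have hsq := hX.setIntegral_gridCount_sq_le hρ hs hε0 hm hB
  have hi1 : Integrable (gridCount X s (ε * s) m) P := integrable_gridCount hX hs m
  have hmeas := (measurable_gridCount X hs (ε * s) m).mono (hX.past_le _) le_rfl
  have hi2 : Integrable (fun ω => gridCount X s (ε * s) m ω ^ 2) P := by
    refine Integrable.of_bound (C := (m : ℝ) ^ 2) (hmeas.pow_const 2).aestronglyMeasurable
      (Eventually.of_forall fun ω => ?_)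
    rw [Real.norm_eq_abs, abs_of_nonneg (sq_nonneg _)]
    exact pow_le_pow_left₀ (gridCount_nonneg X _ _ m ω) (gridCount_le X _ _ m ω) 2
  -- The truncation loses at most `N ^ 2 / M`, whose integral over `B` is at most `P.real B`.
  have hpt : ∀ ω, gridCount X s (ε * s) m ω - gridCount X s (ε * s) m ω ^ 2 / M
      ≤ min (gridCount X s (ε * s) m ω) M := by
    intro ω
    set N := gridCount X s (ε * s) m ω
    refine le_min ?_ ?_
    · have : 0 ≤ N ^ 2 / M := by positivity
      linarith
    · have : N ≤ M + N ^ 2 / M := by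
        rw [← sub_nonneg]
        have : M + N ^ 2 / M - N = (M ^ 2 + N ^ 2 - N * M) / M := by field_simp
        rw [this]
        refine div_nonneg ?_ hM0.le
        nlinarith [sq_nonneg (M - N), sq_nonneg (M + N), sq_nonneg M, sq_nonneg N]
      linarith
  calc K * P.real B = (K + 1) * P.real B - (M * P.real B) / M := by field_simp; ring
    _ ≤ ∫ ω in B, gridCount X s (ε * s) m ω ∂P - (∫ ω in B, gridCount X s (ε * s) m ω ^ 2 ∂P) / M := by
        gcongr
    _ = ∫ ω in B, (gridCount X s (ε * s) m ω - gridCount X s (ε * s) m ω ^ 2 / M) ∂P := by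
        rw [integral_sub hi1.restrict (hi2.restrict.div_const M), integral_div]
    _ ≤ _ := integral_mono (hi1.restrict.sub (hi2.restrict.div_const M))
        (hi1.restrict.inf (integrable_const M)) hpt

end Block

/-! ### A truncated lower bound for the upcrossings of one block -/

lemma gridCount_eq_card {Ω : Type*} (X : ℝ → Ω → ℝ) (s ε : ℝ) (m : ℕ) (ω : Ω) :
    gridCount X s ε m ω = (((Finset.range m).filter
      (fun k => X (gridPt s m k) ω < -ε ∧ ε < X (gridPt s m (k + 1)) ω)).card : ℝ) := by
  classical
  rw [gridCount, Finset.card_filter]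
  push_cast
  refine Finset.sum_congr rfl fun k _ => ?_
  simp only [crossSet, indicator_apply, mem_ofPred_eq, Pi.one_apply]

section Block

variable {Ω : Type*} [MeasurableSpace Ω] {P : Measure Ω} [IsProbabilityMeasure P]
  {ρ : ℝ} {X : ℝ → Ω → ℝ}

/-- A bounded variable `V` that is a lower bound for the number of upcrossings during `(s, 2s]` and
whose conditional mean given the past of `s` is at least `K` wherever `|X s| ≤ L * s`. It is the
upper limit of the truncated grid counts as the mesh tends to `0`; the bound on the mean survives
by the reverse Fatou lemma. -/
lemma IsStableProcess.exists_block (hρ : ρ ∈ Set.Ioo (0 : ℝ) 1)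
    (hX : IsStableProcess 1 ρ 0 P X) {L : ℝ} (hL : 0 ≤ L) (K : ℝ) :
    ∃ M > 0, ∀ s > 0, ∃ V : Ω → ℝ, Measurable[past X (2 * s)] V ∧
      (∀ ω, 0 ≤ V ω) ∧ (∀ ω, V ω ≤ M) ∧
      (∀ᵐ ω ∂P, ENNReal.ofReal (V ω) ≤ (upcrossings X (Ioc s (2 * s)) ω : ℝ≥0∞)) ∧
      ∀ B : Set Ω, MeasurableSet[past X s] B → (∀ ω ∈ B, |X s ω| ≤ L * s) →
        K * P.real B ≤ ∫ ω in B, V ω ∂P := by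
  obtain ⟨ε, hε, M, hM, h⟩ := hX.exists_block_bound hρ hL K
  refine ⟨M, hM, fun s hs => ?_⟩
  set G : ℕ → Ω → ℝ≥0∞ := fun m ω => ENNReal.ofReal (min (gridCount X s (ε * s) m ω) M) with hG
  set W : Ω → ℝ≥0∞ := fun ω => limsup (fun m => G m ω) atTop with hW
  have hGm : ∀ m, Measurable[past X (2 * s)] (G m) := fun m => by
    let _ := past X (2 * s)
    exact ((measurable_gridCount X hs (ε * s) m).min measurable_const).ennreal_ofReal
  have hWm : Measurable[past X (2 * s)] W := by
    let _ := past X (2 * s)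
    exact Measurable.limsup hGm
  have hGM : ∀ m ω, G m ω ≤ ENNReal.ofReal M := fun m ω =>
    ENNReal.ofReal_le_ofReal (min_le_right _ _)
  have hWM : ∀ ω, W ω ≤ ENNReal.ofReal M := fun ω =>
    limsup_le_of_le (by isBoundedDefault) (Eventually.of_forall fun m => hGM m ω)
  have hWtop : ∀ ω, W ω ≠ ∞ := fun ω => ((hWM ω).trans_lt ENNReal.ofReal_lt_top).ne
  refine ⟨fun ω => (W ω).toReal, ?_, fun ω => ENNReal.toReal_nonneg, fun ω =>
    ENNReal.toReal_le_of_le_ofReal hM.le (hWM ω), ?_, fun B hB hBL => ?_⟩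
  · let _ := past X (2 * s)
    exact hWm.ennreal_toReal
  · filter_upwards [hX.cadlag] with ω hω
    rw [ENNReal.ofReal_toReal (hWtop ω)]
    refine limsup_le_of_le (by isBoundedDefault) ?_
    filter_upwards [eventually_card_le_encard hω.1 hω.2 hs (mul_pos hε hs)] with m hm
    calc G m ω ≤ ENNReal.ofReal (gridCount X s (ε * s) m ω) :=
          ENNReal.ofReal_le_ofReal (min_le_left _ _)
      _ ≤ _ := by
          rw [gridCount_eq_card, ENNReal.ofReal_natCast]
          have := ENat.toENNReal_le.2 hm
          rwa [ENat.toENNReal_coe] at this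
  · have hB' := hX.past_le s _ hB
    have hWm' : Measurable W := hWm.mono (hX.past_le _) le_rfl
    have hGm' : ∀ m, Measurable (G m) := fun m => (hGm m).mono (hX.past_le _) le_rfl
    have hfatou : limsup (fun m => ∫⁻ ω in B, G m ω ∂P) atTop ≤ ∫⁻ ω in B, W ω ∂P :=
      limsup_lintegral_le (fun _ => ENNReal.ofReal M) hGm'
        (fun m => Eventually.of_forall (hGM m)) (by simp [ENNReal.mul_eq_top])
    have hlow : ENNReal.ofReal (K * P.real B) ≤ ∫⁻ ω in B, W ω ∂P := by
      refine le_trans ?_ hfatou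
      refine le_limsup_of_frequently_le (Eventually.frequently ?_) (by isBoundedDefault)
      filter_upwards [h s hs] with m hm
      refine (ENNReal.ofReal_le_ofReal (hm B hB hBL)).trans (le_of_eq ?_)
      refine ofReal_integral_eq_lintegral_ofReal ?_ (Eventually.of_forall fun ω =>
        le_min (gridCount_nonneg X _ _ m ω) hM.le)
      exact (integrable_gridCount hX hs m).restrict.inf (integrable_const M)
    rw [integral_toReal hWm'.aemeasurable (Eventually.of_forall fun ω => (hWtop ω).lt_top)]
    refine (ENNReal.ofReal_le_iff_le_toReal ?_).1 hlow
    refine ne_top_of_le_ne_top ?_ (lintegral_mono hWM)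
    simp [ENNReal.mul_eq_top]

end Block

/-! ### Laws of large numbers for orthogonal variables -/

section LLN

variable {Ω : Type*} [MeasurableSpace Ω] {P : Measure Ω} [IsProbabilityMeasure P]

lemma integral_sum_sq_le {D : ℕ → Ω → ℝ} {M : ℝ} (hD : ∀ n, Measurable (D n))
    (hM : ∀ n ω, |D n ω| ≤ M) (horth : ∀ i j, i < j → ∫ ω, D i ω * D j ω ∂P = 0) (N : ℕ) :
    ∫ ω, (∑ n ∈ Finset.range N, D n ω) ^ 2 ∂P ≤ N * M ^ 2 := by
  have hint : ∀ i j, Integrable (fun ω => D i ω * D j ω) P := fun i j => by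
    refine Integrable.of_bound (C := M * M) ((hD i).mul (hD j)).aestronglyMeasurable
      (Eventually.of_forall fun ω => ?_)
    rw [Real.norm_eq_abs, abs_mul]
    exact mul_le_mul (hM i ω) (hM j ω) (abs_nonneg _) ((abs_nonneg _).trans (hM i ω))
  have hoff : ∀ i j, ∫ ω, D i ω * D j ω ∂P ≤ if i = j then M ^ 2 else 0 := by
    intro i j
    rcases lt_trichotomy i j with h | h | h
    · simp [horth i j h, h.ne]
    · subst h
      simp only [if_true]
      calc ∫ ω, D i ω * D i ω ∂P ≤ ∫ _, M ^ 2 ∂P := by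
            refine integral_mono (hint i i) (integrable_const _) fun ω => ?_
            have := sq_le_sq' (neg_le_of_abs_le (hM i ω)) (le_of_abs_le (hM i ω))
            simpa [sq] using this
        _ = M ^ 2 := by simp
    · simp_rw [mul_comm (D i _)]
      simp [horth j i h, h.ne']
  simp_rw [sq (∑ n ∈ Finset.range N, D n _), Finset.sum_mul_sum]
  rw [integral_finsetSum _ fun i _ => integrable_finsetSum _ fun j _ => hint i j]
  calc _ = ∑ i ∈ Finset.range N, ∑ j ∈ Finset.range N, ∫ ω, D i ω * D j ω ∂P :=
        Finset.sum_congr rfl fun i _ => integral_finsetSum _ fun j _ => hint i j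
    _ ≤ ∑ i ∈ Finset.range N, ∑ j ∈ Finset.range N, if i = j then M ^ 2 else 0 :=
        Finset.sum_le_sum fun i _ => Finset.sum_le_sum fun j _ => hoff i j
    _ = ∑ i ∈ Finset.range N, M ^ 2 := by
        refine Finset.sum_congr rfl fun i hi => ?_
        rw [Finset.sum_ite_eq, if_pos hi]
    _ = _ := by simp

/-- Strong law of large numbers for bounded orthogonal variables: the second moment bound makes
`∑ k, E[(S (k ^ 2) / k ^ 2) ^ 2]` finite, so the averages converge along the squares, and
boundedness fills the gaps between consecutive squares. -/
lemma ae_eventually_abs_sum_le {D : ℕ → Ω → ℝ} {M : ℝ} (hD : ∀ n, Measurable (D n))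
    (hM : ∀ n ω, |D n ω| ≤ M) (horth : ∀ i j, i < j → ∫ ω, D i ω * D j ω ∂P = 0) :
    ∀ᵐ ω ∂P, ∀ᶠ N : ℕ in atTop, |∑ n ∈ Finset.range N, D n ω| ≤ N := by
  set S : ℕ → Ω → ℝ := fun N ω => ∑ n ∈ Finset.range N, D n ω with hS
  have hSm : ∀ N, Measurable (S N) := fun N => Finset.measurable_sum _ fun n _ => hD n
  have hSint : ∀ N, Integrable (fun ω => S N ω ^ 2) P := fun N => by
    refine Integrable.of_bound (C := (N * M) ^ 2) ((hSm N).pow_const 2).aestronglyMeasurable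
      (Eventually.of_forall fun ω => ?_)
    rw [Real.norm_eq_abs, abs_pow]
    refine pow_le_pow_left₀ (abs_nonneg _) ?_ 2
    calc |S N ω| ≤ ∑ n ∈ Finset.range N, |D n ω| := Finset.abs_sum_le_sum_abs _ _
      _ ≤ ∑ n ∈ Finset.range N, M := Finset.sum_le_sum fun n _ => hM n ω
      _ = N * M := by simp
  have hcheb : ∀ k : ℕ, P {ω | (k : ℝ) ^ 2 < 2 * |S (k ^ 2) ω|}
      ≤ ENNReal.ofReal (4 * M ^ 2 * (1 / (k : ℝ) ^ 2)) := by
    intro k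
    rcases Nat.eq_zero_or_pos k with rfl | hk
    · simp [hS]
    have hk' : (0 : ℝ) < k := by exact_mod_cast hk
    have h1 := mul_meas_ge_le_integral_of_nonneg (μ := P) (f := fun ω => S (k ^ 2) ω ^ 2)
      (Eventually.of_forall fun ω => sq_nonneg _) (hSint _) ((k : ℝ) ^ 4 / 4)
    have h2 := integral_sum_sq_le hD hM horth (k ^ 2)
    have h3 : P.real {ω | (k : ℝ) ^ 2 < 2 * |S (k ^ 2) ω|}
        ≤ P.real {ω | (k : ℝ) ^ 4 / 4 ≤ S (k ^ 2) ω ^ 2} := by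
      refine measureReal_mono fun ω hω => ?_
      have hω : (k : ℝ) ^ 2 < 2 * |S (k ^ 2) ω| := hω
      change (k : ℝ) ^ 4 / 4 ≤ S (k ^ 2) ω ^ 2
      have := pow_le_pow_left₀ (by positivity) hω.le 2
      rw [mul_pow, sq_abs] at this
      nlinarith
    rw [ENNReal.le_ofReal_iff_toReal_le (measure_ne_top _ _) (by positivity), ← measureReal_def]
    refine h3.trans ?_
    rw [← mul_le_mul_iff_right₀ (by positivity : (0 : ℝ) < (k : ℝ) ^ 4 / 4)]
    refine h1.trans (h2.trans (le_of_eq ?_))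
    push_cast
    field_simp
  have hsum : ∑' k : ℕ, P {ω | (k : ℝ) ^ 2 < 2 * |S (k ^ 2) ω|} ≠ ∞ := by
    refine ne_top_of_le_ne_top ?_ (ENNReal.tsum_le_tsum hcheb)
    have : Summable fun k : ℕ => 4 * M ^ 2 * (1 / (k : ℝ) ^ 2) :=
      (Real.summable_one_div_nat_pow.2 (by norm_num)).mul_left _
    exact this.tsum_ofReal_ne_top
  filter_upwards [ae_eventually_notMem hsum] with ω hω
  have hsq : Tendsto Nat.sqrt atTop atTop :=
    tendsto_atTop_atTop.2 fun b => ⟨b * b, fun n hn => Nat.le_sqrt.2 hn⟩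
  obtain ⟨k₀, hk₀⟩ := exists_nat_ge (4 * M + 1)
  filter_upwards [hsq.eventually hω, hsq.eventually (eventually_ge_atTop k₀),
    eventually_gt_atTop 0] with N h1 h2 hN
  set k := N.sqrt with hk
  have hkN : k ^ 2 ≤ N := by rw [sq]; exact Nat.sqrt_le N
  have hNk : N ≤ k ^ 2 + 2 * k := by
    have := Nat.sqrt_le_add N
    rw [← hk] at this
    nlinarith
  have h1 : 2 * |S (k ^ 2) ω| ≤ (k : ℝ) ^ 2 := not_lt.1 h1
  have hM0 : 0 ≤ M := (abs_nonneg _).trans (hM 0 ω)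
  have hdiff : |S N ω - S (k ^ 2) ω| ≤ 2 * k * M := by
    rw [hS]
    simp only
    rw [← Finset.sum_Ico_eq_sub _ hkN]
    calc |∑ n ∈ Finset.Ico (k ^ 2) N, D n ω| ≤ ∑ n ∈ Finset.Ico (k ^ 2) N, |D n ω| :=
          Finset.abs_sum_le_sum_abs _ _
      _ ≤ ∑ n ∈ Finset.Ico (k ^ 2) N, M := Finset.sum_le_sum fun n _ => hM n ω
      _ = ((N - k ^ 2 : ℕ) : ℝ) * M := by simp
      _ ≤ 2 * k * M := by
          gcongr
          have : N - k ^ 2 ≤ 2 * k := by omega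
          exact_mod_cast this
  have hkk : (4 * M + 1) ≤ k := hk₀.trans (by exact_mod_cast h2)
  have hkN' : (k : ℝ) ^ 2 ≤ N := by exact_mod_cast hkN
  have htri : |S N ω| ≤ |S (k ^ 2) ω| + |S N ω - S (k ^ 2) ω| := by
    have := abs_add_le (S (k ^ 2) ω) (S N ω - S (k ^ 2) ω)
    simpa using this
  change |S N ω| ≤ N
  nlinarith

/-- Lévy's conditional form of the law of large numbers, for a decreasing family `F` of σ-algebras:
if `V j` is determined by `F i` for `i < j` and has conditional mean at least `K` given `F j` on
the event `A j`, then the partial sums of `V` dominate `K` times the number of events `A j` that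
occur, up to a linear error. -/
lemma ae_eventually_sum_ge {F : ℕ → MeasurableSpace Ω} (hF : ∀ n, F n ≤ ‹MeasurableSpace Ω›)
    (hFa : Antitone F) {V : ℕ → Ω → ℝ} {M K : ℝ} (hVF : ∀ i j, i < j → Measurable[F i] (V j))
    (hV : ∀ n, Measurable (V n)) (hV0 : ∀ n ω, 0 ≤ V n ω) (hVM : ∀ n ω, V n ω ≤ M)
    {A : ℕ → Set Ω} (hA : ∀ n, MeasurableSet[F n] (A n))
    (hK : ∀ n B, MeasurableSet[F n] B → B ⊆ A n → K * P.real B ≤ ∫ ω in B, V n ω ∂P) :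
    ∀ᵐ ω ∂P, ∀ᶠ N : ℕ in atTop,
      (∑ n ∈ Finset.range N, (A n).indicator (fun _ => K) ω) - N
        ≤ ∑ n ∈ Finset.range N, V n ω := by
  have hVint : ∀ n, Integrable (V n) P := fun n =>
    Integrable.of_bound (C := M) (hV n).aestronglyMeasurable (Eventually.of_forall fun ω => by
      rw [Real.norm_eq_abs, abs_of_nonneg (hV0 n ω)]
      exact hVM n ω)
  -- Clipping gives a version of the conditional expectation that is bounded everywhere.
  set E : ℕ → Ω → ℝ := fun n ω => max (min ((P[V n | F n]) ω) M) 0 with hE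
  have hEm : ∀ n, Measurable[F n] (E n) := fun n => by
    have h := (stronglyMeasurable_condExp (m := F n) (μ := P) (f := V n)).measurable
    let _ := F n
    exact (h.min measurable_const).max measurable_const
  have hE0 : ∀ n ω, 0 ≤ E n ω := fun n ω => le_max_right _ _
  have hEM : ∀ n ω, E n ω ≤ M := fun n ω =>
    max_le (min_le_right _ _) ((hV0 n ω).trans (hVM n ω))
  have hEeq : ∀ n, E n =ᵐ[P] P[V n | F n] := by
    intro n
    have h0 : 0 ≤ᵐ[P] P[V n | F n] := condExp_nonneg (Eventually.of_forall (hV0 n))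
    have hM : P[V n | F n] ≤ᵐ[P] P[fun _ => M | F n] :=
      condExp_mono (hVint n) (integrable_const M) (Eventually.of_forall (hVM n))
    rw [condExp_const (hF n)] at hM
    filter_upwards [h0, hM] with ω h1 h2
    simp only [hE]
    rw [min_eq_left h2]
    exact max_eq_left h1
  have hEint : ∀ n, Integrable (E n) P := fun n => integrable_condExp.congr (hEeq n).symm
  have hEK : ∀ n, ∀ᵐ ω ∂P, ω ∈ A n → K ≤ E n ω := by
    intro n
    set B : Set Ω := A n ∩ {ω | E n ω < K} with hB
    have hBm : MeasurableSet[F n] B :=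
      MeasurableSet.inter (hA n) (hEm n measurableSet_Iio)
    have hBm' : MeasurableSet B := hF n _ hBm
    have h1 := hK n B hBm inter_subset_left
    have h2 : ∫ ω in B, E n ω ∂P = ∫ ω in B, V n ω ∂P := by
      rw [← setIntegral_condExp (hF n) (hVint n) hBm]
      exact setIntegral_congr_ae hBm' ((hEeq n).mono fun ω h _ => h)
    have hint : Integrable (fun ω => K - E n ω) (P.restrict B) :=
      (integrable_const K).sub (hEint n).restrict
    have hnn : 0 ≤ᵐ[P.restrict B] fun ω => K - E n ω := by
      filter_upwards [ae_restrict_mem hBm'] with ω hω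
      exact sub_nonneg.2 hω.2.le
    have h3 : ∫ ω in B, (K - E n ω) ∂P = 0 := by
      refine le_antisymm ?_ (integral_nonneg_of_ae hnn)
      rw [integral_sub (integrable_const K) (hEint n).restrict, setIntegral_const, h2, smul_eq_mul]
      linarith
    have h4 := (ae_restrict_iff' hBm').1 ((integral_eq_zero_iff_of_nonneg_ae hnn hint).1 h3)
    filter_upwards [h4] with ω hω hωA
    by_contra hlt
    have hlt := not_le.1 hlt
    have := hω ⟨hωA, hlt⟩
    simp only [Pi.zero_apply] at this
    linarith
  set D : ℕ → Ω → ℝ := fun n ω => V n ω - E n ω with hD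
  have hDm : ∀ n, Measurable (D n) := fun n => (hV n).sub ((hEm n).mono (hF n) le_rfl)
  have hDM : ∀ n ω, |D n ω| ≤ M := fun n ω =>
    abs_le.2 ⟨by simp only [hD]; linarith [hV0 n ω, hEM n ω],
      by simp only [hD]; linarith [hE0 n ω, hVM n ω]⟩
  have horth : ∀ i j, i < j → ∫ ω, D i ω * D j ω ∂P = 0 := by
    intro i j hij
    have hDj : StronglyMeasurable[F i] (D j) := by
      have h1 := hVF i j hij
      have h2 := (hEm j).mono (hFa hij.le) le_rfl
      let _ := F i
      exact (h1.sub h2).stronglyMeasurable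
    have hDi : Integrable (D i) P := (hVint i).sub (hEint i)
    have hprod : Integrable (D j * D i) P := by
      refine Integrable.of_bound (C := M * M) ((hDm j).mul (hDm i)).aestronglyMeasurable
        (Eventually.of_forall fun ω => ?_)
      rw [Pi.mul_apply, Real.norm_eq_abs, abs_mul]
      exact mul_le_mul (hDM j ω) (hDM i ω) (abs_nonneg _) ((abs_nonneg _).trans (hDM j ω))
    have hzero : P[D i | F i] =ᵐ[P] 0 := by
      have h1 : P[V i - E i | F i] =ᵐ[P] P[V i | F i] - P[E i | F i] :=
        condExp_sub (hVint i) (hEint i) _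
      rw [condExp_of_stronglyMeasurable (hF i) (hEm i).stronglyMeasurable (hEint i)] at h1
      filter_upwards [h1, hEeq i] with ω h1 h2
      have h1 : (P[D i | F i]) ω = _ := h1
      rw [h1, Pi.sub_apply, h2, sub_self]
      rfl
    have hpull := condExp_mul_of_stronglyMeasurable_left hDj hprod hDi
    calc ∫ ω, D i ω * D j ω ∂P = ∫ ω, (D j * D i) ω ∂P := by simp [mul_comm]
      _ = ∫ ω, (P[D j * D i | F i]) ω ∂P := (integral_condExp (hF i)).symm
      _ = ∫ ω, 0 ∂P := by
          refine integral_congr_ae ?_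
          filter_upwards [hpull, hzero] with ω h1 h2
          rw [h1, Pi.mul_apply, h2, Pi.zero_apply, mul_zero]
      _ = 0 := by simp
  filter_upwards [ae_eventually_abs_sum_le hDm hDM horth, ae_all_iff.2 hEK] with ω h1 h2
  filter_upwards [h1] with N hN
  have h3 : ∑ n ∈ Finset.range N, (A n).indicator (fun _ => K) ω
      ≤ ∑ n ∈ Finset.range N, E n ω := by
    refine Finset.sum_le_sum fun n _ => ?_
    by_cases hω : ω ∈ A n
    · rw [indicator_of_mem hω]; exact h2 n hω
    · rw [indicator_of_notMem hω]; exact hE0 n ω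
  have h4 := neg_le_of_abs_le hN
  simp only [hD, Finset.sum_sub_distrib] at h4
  linarith

end LLN

/-! ### The density of good dyadic times -/

/-- The dyadic times `2 ^ (-(n + 1))`; the intervals `(dyadic n, 2 * dyadic n]` tile `(0, 1]`. -/
noncomputable def dyadic (n : ℕ) : ℝ := (1 / 2) ^ (n + 1)

lemma dyadic_pos (n : ℕ) : 0 < dyadic n := by unfold dyadic; positivity

lemma two_mul_dyadic_succ (n : ℕ) : 2 * dyadic (n + 1) = dyadic n := by unfold dyadic; ring

lemma dyadic_antitone : Antitone dyadic := antitone_nat_of_succ_le fun n => by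
  linarith [two_mul_dyadic_succ n, dyadic_pos (n + 1)]

lemma two_mul_dyadic_le {i j : ℕ} (h : i < j) : 2 * dyadic j ≤ dyadic i := by
  rw [← two_mul_dyadic_succ i]
  linarith [dyadic_antitone (Nat.succ_le_of_lt h)]

/-- The recursion `a n ≤ 3 / 4 * a (n + 1) + b n` bounds the sum of `a` by the sum of `b`, up to a
boundary term. -/
lemma sum_le_of_recursion {a b : ℕ → ℝ} (h : ∀ n, a n ≤ 3 / 4 * a (n + 1) + b n)
    (ha : ∀ n, 0 ≤ a n) (N : ℕ) :
    ∑ n ∈ Finset.range N, a n ≤ 3 * a N + 4 * ∑ n ∈ Finset.range N, b n := by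
  induction N with
  | zero => simpa using ha 0
  | succ N ih =>
    rw [Finset.sum_range_succ, Finset.sum_range_succ]
    linarith [h N]

lemma sqrt_add_le_sqrt_add_sqrt {x y : ℝ} (hx : 0 ≤ x) (hy : 0 ≤ y) : √(x + y) ≤ √x + √y := by
  refine Real.sqrt_le_iff.2 ⟨by positivity, ?_⟩
  have := mul_nonneg (Real.sqrt_nonneg x) (Real.sqrt_nonneg y)
  nlinarith [Real.sq_sqrt hx, Real.sq_sqrt hy]

section Density

variable {Ω : Type*} [MeasurableSpace Ω] {P : Measure Ω} [IsProbabilityMeasure P]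
  {ρ : ℝ} {X : ℝ → Ω → ℝ}

/-- The increment of the path over `[dyadic (n + 1), dyadic n]`, rescaled to unit size. -/
noncomputable def scaledIncrement {Ω : Type*} (X : ℝ → Ω → ℝ) (n : ℕ) (ω : Ω) : ℝ :=
  (dyadic n)⁻¹ * (X (dyadic n) ω - X (dyadic (n + 1)) ω)

omit [IsProbabilityMeasure P] in
lemma IsStableProcess.measurable_scaledIncrement (hX : IsStableProcess 1 ρ 0 P X) (n : ℕ) :
    Measurable (scaledIncrement X n) :=
  ((hX.measurable _).sub (hX.measurable _)).const_mul _

lemma IsStableProcess.map_scaledIncrement (hρ : ρ ∈ Set.Ioo (0 : ℝ) 1)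
    (hX : IsStableProcess 1 ρ 0 P X) (n : ℕ) :
    P.map (scaledIncrement X n) = cauchyMeasure 0 (1 / 2) := by
  have h1 := dyadic_pos (n + 1)
  have h2 := two_mul_dyadic_succ n
  have hd : dyadic n - dyadic (n + 1) = dyadic (n + 1) := by linarith
  have hm := (hX.measurable (dyadic n)).sub (hX.measurable (dyadic (n + 1)))
  have := Measure.isProbabilityMeasure_map (μ := P) (hX.measurable_scaledIncrement n).aemeasurable
  refine Measure.ext_of_charFun (funext fun z => ?_)
  have hc := charFun_map_mul_comp (μ := P) hm.aemeasurable (dyadic n)⁻¹ z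
  have hmap := hX.map_increment hρ h1.le (by linarith : dyadic (n + 1) < dyadic n)
  have hc' : MeasureTheory.charFun (P.map (scaledIncrement X n)) z
      = MeasureTheory.charFun (cauchyMeasure 0 (dyadic n - dyadic (n + 1)).toNNReal)
        ((dyadic n)⁻¹ * z) := by
    rw [← hmap]
    exact hc
  rw [hc', charFun_cauchyMeasure (by rw [hd]; simpa using h1),
    charFun_cauchyMeasure (by positivity), hd, Real.coe_toNNReal _ h1.le, ← h2, abs_mul, abs_inv,
    abs_of_pos (by positivity : 0 < 2 * dyadic (n + 1))]
  congr 2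
  push_cast
  field_simp

omit [IsProbabilityMeasure P] in
lemma IsStableProcess.indepFun_scaledIncrement (hX : IsStableProcess 1 ρ 0 P X) {i j : ℕ}
    (hij : i < j) : IndepFun (scaledIncrement X j) (scaledIncrement X i) P := by
  have h0 : dyadic (i + 1) ≤ dyadic i := dyadic_antitone (Nat.le_succ i)
  have h := hX.indep (dyadic (i + 1)) (dyadic i) (dyadic_pos _).le h0
  refine (IndepFun_iff_Indep _ _ _).2
    (indep_of_indep_of_le_left (indep_of_indep_of_le_right h ?_) ?_)
  · have hm : Measurable[MeasurableSpace.comap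
        (fun ω => X (dyadic i) ω - X (dyadic (i + 1)) ω) inferInstance]
        (fun ω => X (dyadic i) ω - X (dyadic (i + 1)) ω) := comap_measurable _
    exact (hm.const_mul (dyadic i)⁻¹).comap_le
  · have h1 : dyadic j ≤ dyadic (i + 1) := dyadic_antitone (Nat.succ_le_of_lt hij)
    have h2 : dyadic (j + 1) ≤ dyadic (i + 1) := dyadic_antitone (by omega)
    have hm1 := measurable_past X (dyadic_pos j).le h1
    have hm2 := measurable_past X (dyadic_pos (j + 1)).le h2
    have hm : Measurable[past X (dyadic (i + 1))] (scaledIncrement X j) := by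
      let _ := past X (dyadic (i + 1))
      exact (hm1.sub hm2).const_mul _
    exact hm.comap_le

/-- The rescaled positions `X (dyadic n) / dyadic n` grow at most polynomially, by
Borel–Cantelli. -/
lemma IsStableProcess.ae_eventually_abs_le (hρ : ρ ∈ Set.Ioo (0 : ℝ) 1)
    (hX : IsStableProcess 1 ρ 0 P X) :
    ∀ᵐ ω ∂P, ∀ᶠ n : ℕ in atTop, |X (dyadic n) ω| / dyadic n ≤ (n : ℝ) ^ 2 := by
  have hb : ∀ n : ℕ, P {ω | 0 < n ∧ dyadic n * (n : ℝ) ^ 2 < |X (dyadic n) ω - X 0 ω|}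
      ≤ ENNReal.ofReal (4 * (1 / (n : ℝ) ^ 2)) := by
    intro n
    rcases Nat.eq_zero_or_pos n with rfl | hn
    · simp
    have hn' : (0 : ℝ) < n := by exact_mod_cast hn
    have hd := dyadic_pos n
    have hmap := hX.map_increment hρ le_rfl hd
    have hm : Measurable (fun ω => X (dyadic n) ω - X 0 ω) :=
      (hX.measurable (dyadic n)).sub (hX.measurable 0)
    have hγ : (dyadic n - 0).toNNReal ≠ 0 := by simpa using hd
    have hγr : ((dyadic n - 0).toNNReal : ℝ) = dyadic n := by
      rw [sub_zero, Real.coe_toNNReal _ hd.le]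
    have h1 := cauchyMeasure_abs_gt_le hγ (by positivity : 0 < dyadic n * (n : ℝ) ^ 2)
    have hC : MeasurableSet {y : ℝ | dyadic n * (n : ℝ) ^ 2 < |y|} :=
      measurableSet_lt measurable_const (by fun_prop)
    rw [ENNReal.le_ofReal_iff_toReal_le (measure_ne_top _ _) (by positivity), ← measureReal_def]
    rw [← hmap, measureReal_def, Measure.map_apply hm hC, ← measureReal_def] at h1
    calc _ ≤ _ := measureReal_mono (fun ω hω => hω.2)
      _ ≤ _ := h1
      _ = _ := by rw [hγr]; field_simp
  have hsum : ∑' n : ℕ, P {ω | 0 < n ∧ dyadic n * (n : ℝ) ^ 2 < |X (dyadic n) ω - X 0 ω|} ≠ ∞ := by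
    refine ne_top_of_le_ne_top ?_ (ENNReal.tsum_le_tsum hb)
    have : Summable fun n : ℕ => 4 * (1 / (n : ℝ) ^ 2) :=
      (Real.summable_one_div_nat_pow.2 (by norm_num)).mul_left _
    exact this.tsum_ofReal_ne_top
  filter_upwards [ae_eventually_notMem hsum, hX.init] with ω h1 h2
  filter_upwards [h1, eventually_gt_atTop 0] with n hn hn0
  rw [div_le_iff₀ (dyadic_pos n), mul_comm]
  by_contra hlt
  refine hn ⟨hn0, ?_⟩
  rw [h2, sub_zero]
  exact not_le.1 hlt

/-- Most dyadic times `s` satisfy `|X s| ≤ L * s`. The square roots of the rescaled positions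
`|X (dyadic n)| / dyadic n` obey a contracting recursion driven by the independent, identically
distributed, integrable variables `√|scaledIncrement X n|`, so their averages are bounded by the
strong law of large numbers, and Markov's inequality for the counting measure applies. -/
lemma IsStableProcess.exists_density (hρ : ρ ∈ Set.Ioo (0 : ℝ) 1)
    (hX : IsStableProcess 1 ρ 0 P X) :
    ∃ L ≥ 0, ∀ᵐ ω ∂P, ∀ᶠ N : ℕ in atTop, (N : ℝ) / 2 ≤
      ∑ n ∈ Finset.range N, {ω | |X (dyadic n) ω| ≤ L * dyadic n}.indicator (fun _ => (1 : ℝ)) ω := by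
  have hsm : Measurable fun x : ℝ => √|x| := by fun_prop
  have hWm := hX.measurable_scaledIncrement
  have hslln := strong_law_ae_real (μ := P) (fun n ω => √|scaledIncrement X n ω|)
    (by
      have h := integrable_sqrt_abs_cauchyMeasure
      rw [← hX.map_scaledIncrement hρ 0] at h
      exact h.comp_measurable (hWm 0))
    (by
      intro i j hij
      rcases lt_or_gt_of_ne hij with h | h
      · exact (hX.indepFun_scaledIncrement h).symm.comp hsm hsm
      · exact (hX.indepFun_scaledIncrement h).comp hsm hsm)
    (by
      intro n
      have : IdentDistrib (scaledIncrement X n) (scaledIncrement X 0) P P :=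
        ⟨(hWm n).aemeasurable, (hWm 0).aemeasurable, by
          rw [hX.map_scaledIncrement hρ, hX.map_scaledIncrement hρ]⟩
      exact this.comp hsm)
  set e : ℝ := ∫ ω, √|scaledIncrement X 0 ω| ∂P with he
  have he0 : 0 ≤ e := integral_nonneg fun ω => Real.sqrt_nonneg _
  set C : ℝ := 3 + 4 * (e + 1) with hC
  have hC0 : 0 < C := by positivity
  refine ⟨(2 * C) ^ 2, by positivity, ?_⟩
  filter_upwards [hslln, hX.ae_eventually_abs_le hρ] with ω h1 h2
  have h1' := h1.eventually (eventually_le_nhds (lt_add_one e))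
  filter_upwards [h1', h2, eventually_gt_atTop 0] with N hN1 hN2 hN0
  have hN' : (0 : ℝ) < N := by exact_mod_cast hN0
  set a : ℕ → ℝ := fun n => √(|X (dyadic n) ω| / dyadic n) with ha
  have hrec : ∀ n, a n ≤ 3 / 4 * a (n + 1) + √|scaledIncrement X n ω| := by
    intro n
    have hd := dyadic_pos n
    have hd1 := dyadic_pos (n + 1)
    have h2 := two_mul_dyadic_succ n
    have hz : |X (dyadic n) ω| / dyadic n
        ≤ (3 / 4) ^ 2 * (|X (dyadic (n + 1)) ω| / dyadic (n + 1)) + |scaledIncrement X n ω| := by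
      have h3 : |X (dyadic n) ω| / dyadic n
          ≤ |X (dyadic (n + 1)) ω| / dyadic n + |scaledIncrement X n ω| := by
        rw [scaledIncrement, abs_mul, abs_inv, abs_of_pos hd, inv_mul_eq_div, ← add_div]
        gcongr
        have := abs_add_le (X (dyadic (n + 1)) ω) (X (dyadic n) ω - X (dyadic (n + 1)) ω)
        simpa using this
      have h4 : |X (dyadic (n + 1)) ω| / dyadic n
          ≤ (3 / 4) ^ 2 * (|X (dyadic (n + 1)) ω| / dyadic (n + 1)) := by
        rw [← h2, mul_comm 2, ← div_div]
        have : 0 ≤ |X (dyadic (n + 1)) ω| / dyadic (n + 1) := by positivity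
        linarith
      linarith
    calc a n ≤ √((3 / 4) ^ 2 * (|X (dyadic (n + 1)) ω| / dyadic (n + 1))
          + |scaledIncrement X n ω|) := Real.sqrt_le_sqrt hz
      _ ≤ √((3 / 4) ^ 2 * (|X (dyadic (n + 1)) ω| / dyadic (n + 1)))
          + √|scaledIncrement X n ω| := sqrt_add_le_sqrt_add_sqrt (by positivity) (abs_nonneg _)
      _ = _ := by
          rw [Real.sqrt_mul (by positivity), Real.sqrt_sq (by norm_num)]
  have ha0 : ∀ n, 0 ≤ a n := fun n => Real.sqrt_nonneg _
  have hsum := sum_le_of_recursion hrec ha0 N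
  have haN : a N ≤ N := by
    rw [← Real.sqrt_sq hN'.le]
    exact Real.sqrt_le_sqrt hN2
  rw [div_le_iff₀ hN'] at hN1
  have hCN : ∑ n ∈ Finset.range N, a n ≤ C * N := by
    rw [hC]
    linarith
  have hpt : ∀ n, 1 - a n / (2 * C) ≤
      {ω | |X (dyadic n) ω| ≤ (2 * C) ^ 2 * dyadic n}.indicator (fun _ => (1 : ℝ)) ω := by
    intro n
    by_cases h : |X (dyadic n) ω| ≤ (2 * C) ^ 2 * dyadic n
    · rw [indicator_of_mem (show ω ∈ {ω | |X (dyadic n) ω| ≤ (2 * C) ^ 2 * dyadic n} from h)]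
      have : 0 ≤ a n / (2 * C) := by have := ha0 n; positivity
      linarith
    · rw [indicator_of_notMem (show ω ∉ {ω | |X (dyadic n) ω| ≤ (2 * C) ^ 2 * dyadic n} from h)]
      have h := not_le.1 h
      rw [← lt_div_iff₀ (dyadic_pos n)] at h
      have : 2 * C ≤ a n := Real.le_sqrt_of_sq_le h.le
      rw [sub_nonpos, le_div_iff₀ (by positivity)]
      linarith
  calc (N : ℝ) / 2 = N - C * N / (2 * C) := by field_simp; ring
    _ ≤ N - (∑ n ∈ Finset.range N, a n) / (2 * C) := by gcongr
    _ = ∑ n ∈ Finset.range N, (1 - a n / (2 * C)) := by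
        rw [Finset.sum_sub_distrib, Finset.sum_div]; simp
    _ ≤ _ := Finset.sum_le_sum fun n _ => hpt n

end Density

/-! ### Upcrossings over all blocks -/

lemma upcrossings_mono {Ω : Type*} (X : ℝ → Ω → ℝ) {S T : Set ℝ} (h : S ⊆ T) (ω : Ω) :
    _root_.upcrossings X S ω ≤ _root_.upcrossings X T ω :=
  encard_le_encard fun _ hs => ⟨h hs.1, hs.2⟩

lemma sum_upcrossings_le {Ω : Type*} (X : ℝ → Ω → ℝ) (ω : Ω) (N : ℕ) :
    ∑ n ∈ Finset.range N, _root_.upcrossings X (Ioc (dyadic n) (2 * dyadic n)) ω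
      ≤ _root_.upcrossings X (Ioc ((1 / 2) ^ N) 1) ω := by
  induction N with
  | zero => simp
  | succ N ih =>
    have h2 : 2 * dyadic N = (1 / 2) ^ N := by unfold dyadic; ring
    have hle : ((1 / 2 : ℝ)) ^ (N + 1) ≤ (1 / 2) ^ N :=
      pow_le_pow_of_le_one (by norm_num) (by norm_num) (Nat.le_succ N)
    have hle1 : ((1 / 2 : ℝ)) ^ N ≤ 1 := pow_le_one₀ (by norm_num) (by norm_num)
    rw [Finset.sum_range_succ, h2]
    refine (add_le_add_left ih _).trans ?_
    unfold _root_.upcrossings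
    rw [← encard_union_eq]
    · refine encard_le_encard ?_
      rintro t (⟨ht, h⟩ | ⟨ht, h⟩)
      · exact ⟨⟨hle.trans_lt ht.1, ht.2⟩, h⟩
      · exact ⟨⟨ht.1, ht.2.trans hle1⟩, h⟩
    · rw [Set.disjoint_left]
      rintro t ⟨ht, -⟩ ⟨ht', -⟩
      exact (ht.1.trans_le ht'.2).false

section Main

variable {Ω : Type*} [MeasurableSpace Ω] {P : Measure Ω} [IsProbabilityMeasure P]
  {ρ : ℝ} {X : ℝ → Ω → ℝ}

lemma IsStableProcess.ae_eventually_upcrossings_ge (hρ : ρ ∈ Set.Ioo (0 : ℝ) 1)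
    (hX : IsStableProcess 1 ρ 0 P X) {K : ℝ} (hK : 0 ≤ K) :
    ∀ᵐ ω ∂P, ∀ᶠ N : ℕ in atTop, ENNReal.ofReal ((K / 2 - 1) * N) ≤
      (_root_.upcrossings X (Ioc ((1 / 2) ^ N) 1) ω : ℝ≥0∞) := by
  obtain ⟨L, hL, hdens⟩ := hX.exists_density hρ
  obtain ⟨M, hM, hblock⟩ := hX.exists_block hρ hL K
  choose V hVm hV0 hVM hVU hVK using fun n => hblock (dyadic n) (dyadic_pos n)
  set A : ℕ → Set Ω := fun n => {ω | |X (dyadic n) ω| ≤ L * dyadic n} with hA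
  have hAm : ∀ n, MeasurableSet[past X (dyadic n)] (A n) := fun n => by
    have h := measurable_past X (dyadic_pos n).le le_rfl
    let _ := past X (dyadic n)
    exact measurableSet_le (continuous_abs.measurable.comp h) measurable_const
  have hlln := ae_eventually_sum_ge (P := P) (F := fun n => past X (dyadic n)) (K := K)
    (fun n => hX.past_le _) (fun i j h => past_mono X (dyadic_antitone h))
    (fun i j h => (hVm j).mono (past_mono X (two_mul_dyadic_le h)) le_rfl)
    (fun n => (hVm n).mono (hX.past_le _) le_rfl) hV0 hVM hAm
    (fun n B hB hBA => hVK n B hB hBA)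
  filter_upwards [hdens, hlln, ae_all_iff.2 hVU] with ω h1 h2 h3
  filter_upwards [h1, h2] with N hN1 hN2
  have hind : ∑ n ∈ Finset.range N, (A n).indicator (fun _ => K) ω
      = K * ∑ n ∈ Finset.range N, (A n).indicator (fun _ => (1 : ℝ)) ω := by
    rw [Finset.mul_sum]
    refine Finset.sum_congr rfl fun n _ => ?_
    by_cases h : ω ∈ A n <;> simp [h]
  calc ENNReal.ofReal ((K / 2 - 1) * N)
      ≤ ENNReal.ofReal (∑ n ∈ Finset.range N, V n ω) := by
        refine ENNReal.ofReal_le_ofReal (le_trans ?_ hN2)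
        rw [hind]
        have := mul_le_mul_of_nonneg_left hN1 hK
        linarith
    _ = ∑ n ∈ Finset.range N, ENNReal.ofReal (V n ω) :=
        ENNReal.ofReal_sum_of_nonneg fun n _ => hV0 n ω
    _ ≤ ∑ n ∈ Finset.range N,
          (_root_.upcrossings X (Ioc (dyadic n) (2 * dyadic n)) ω : ℝ≥0∞) :=
        Finset.sum_le_sum fun n _ => h3 n
    _ = ((∑ n ∈ Finset.range N, _root_.upcrossings X (Ioc (dyadic n) (2 * dyadic n)) ω : ℕ∞) :
          ℝ≥0∞) := (map_sum ENat.toENNRealRingHom _ _).symm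
    _ ≤ _ := ENat.toENNReal_le.2 (sum_upcrossings_le X ω N)

end Main

/-- For a stable process `X` with parameters `(1, ρ)`, `ρ ∈ (0,1)`,
issued from the origin, almost surely `U_{[t,1]} / log(1/t) → ∞` as `t ↓ 0`. -/
theorem cauchy_upcrossings_at_zero
    {Ω : Type*} [MeasurableSpace Ω] (P : Measure Ω) [IsProbabilityMeasure P]
    (ρ : ℝ) (hρ : ρ ∈ Set.Ioo (0 : ℝ) 1)
    (X : ℝ → Ω → ℝ) (hX : IsStableProcess 1 ρ 0 P X) :
    ∀ᵐ ω ∂P,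
      Tendsto
        (fun t : ℝ =>
          (upcrossings X (Set.Icc t 1) ω : ℝ≥0∞) / ENNReal.ofReal (Real.log (1 / t)))
        (𝓝[>] (0 : ℝ)) (𝓝 ⊤) := by
  -- This value of `K` makes `K / 2 - 1 = 2 * (k + 1)`, and `log (1 / t) ≤ 2 * N` below.
  have hall := ae_all_iff.2 fun k : ℕ =>
    hX.ae_eventually_upcrossings_ge hρ (K := 4 * (k + 1) + 2) (by positivity)
  filter_upwards [hall] with ω hω
  refine ENNReal.tendsto_nhds_top_iff_nat.2 fun k => ?_
  have hlog : Tendsto (fun t : ℝ => Real.log (1 / t)) (𝓝[>] (0 : ℝ)) atTop := by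
    simp_rw [one_div]
    exact Real.tendsto_log_atTop.comp tendsto_inv_nhdsGT_zero
  have hlog2 : 0 < Real.log 2 := Real.log_pos (by norm_num)
  have hfl : Tendsto (fun t : ℝ => ⌊Real.log (1 / t) / Real.log 2⌋₊) (𝓝[>] (0 : ℝ)) atTop :=
    tendsto_nat_floor_atTop.comp (hlog.atTop_div_const hlog2)
  filter_upwards [hfl.eventually (hω k), hfl.eventually (eventually_ge_atTop 1),
    hlog.eventually_gt_atTop 0, self_mem_nhdsWithin] with t h1 h2 h3 ht
  have ht : 0 < t := ht
  set N := ⌊Real.log (1 / t) / Real.log 2⌋₊ with hN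
  have hN1 : (1 : ℝ) ≤ N := by exact_mod_cast h2
  have hlow : N * Real.log 2 ≤ Real.log (1 / t) := by
    rw [← le_div_iff₀ hlog2]
    exact Nat.floor_le (by positivity)
  have hup : Real.log (1 / t) ≤ 2 * N := by
    have h := Nat.lt_floor_add_one (Real.log (1 / t) / Real.log 2)
    rw [← hN, div_lt_iff₀ hlog2] at h
    have : Real.log 2 ≤ 1 := by linarith [Real.log_two_lt_d9]
    nlinarith
  have htN : t ≤ (1 / 2) ^ N := by
    rw [← Real.log_le_log_iff ht (by positivity), Real.log_pow, one_div, Real.log_inv]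
    rw [one_div, Real.log_inv] at hlow
    linarith
  have hsub : Ioc ((1 / 2 : ℝ) ^ N) 1 ⊆ Icc t 1 := fun u hu => ⟨htN.trans hu.1.le, hu.2⟩
  have hge : ((k + 1 : ℕ) : ℝ≥0∞) ≤
      (_root_.upcrossings X (Set.Icc t 1) ω : ℝ≥0∞) / ENNReal.ofReal (Real.log (1 / t)) := by
    rw [ENNReal.le_div_iff_mul_le (Or.inl (by simpa using h3)) (Or.inl ENNReal.ofReal_ne_top),
      ← ENNReal.ofReal_natCast, ← ENNReal.ofReal_mul (by positivity)]
    calc _ ≤ ENNReal.ofReal (((4 * (k + 1) + 2) / 2 - 1) * N) := by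
          refine ENNReal.ofReal_le_ofReal ?_
          have := mul_le_mul_of_nonneg_left hup (by positivity : (0 : ℝ) ≤ (k : ℝ) + 1)
          push_cast
          linarith
      _ ≤ _ := h1
      _ ≤ _ := ENat.toENNReal_le.2 (upcrossings_mono X hsub ω)
  refine lt_of_lt_of_le ?_ hge
  exact_mod_cast Nat.lt_succ_self k
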